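/- arXiv:1912.02560 — 4 statements merged into one kernel-verified Lean document; each statement's English description precedes it below -/
import Mathlib

section
/- Let $G$ be a connected graph with maximal degree $\Delta \geq 2$ (a natural number) such that $G$ has infinite motion, i.e. every automorphism of $G$ other than the identity moves infinitely many vertices. Then there exists a vertex colouring of $G$ using at most $1 + (\tfrac{5}{2} + \tfrac{3}{2}\log_2 \Delta)\lceil \sqrt{\Delta} \rceil$ colours which is asymmetric, i.e. the only automorphism of $G$ mapping every vertex to a vertex of the same colour is the identity. -/
/-!
Let `m = ⌈√Δ⌉`, give a root `r` a colour of its own, and colour the levels (spheres around `r`) one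
after the other. The invariant (`Good`) is that the group `A` of automorphisms preserving the
colours used up to level `n` fixes all levels below `n` pointwise and has orbits of size at most `m`
on level `n`. The step to level `n + 1` (`good_succ`) has two ingredients.

*Fixing level `n`.* By infinite motion it suffices that colour-preserving automorphisms preserve the
set of parents (neighbours on level `n`) of every vertex `x` on level `n + 1`, since then an
automorphism may be replaced by the identity beyond level `n` (`fixes_ball`). Orbits on level
`n + 1` have at most `m * Δ` elements, each having a parent in an orbit of size at most `m`. If the
parent set is not constant on an orbit `O`, choose an orbit `U` on level `n` such that the trace of
the parent set on `U` varies on `O`. As `|U| ≤ m`, some `m` vertices of `O` separate all points of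
`U` which are separated by the parent sets of vertices in `O` (`exists_separating`); marking these
vertices with `m` distinct colours forces the traces to be preserved (`exists_labels`). All traces
occur equally often on `O`, so orbits at least halve. Hence after `log₂ (m * Δ)` such batches of
colours all parent sets are preserved (`exists_marks`).

*Small orbits on level `n + 1`.* Once level `n` is fixed, orbits on level `n + 1` consist of
vertices with the same parents, so there are at most `Δ ≤ m * m` candidates. Distributing `m` default
colours evenly among the unmarked ones leaves orbits of size at most `m`; marked vertices are fixed.

In total `1 + m + m * log₂ (m * Δ)` colours suffice, and `m * Δ ≤ 2 * Δ ^ (3 / 2)`.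
-/

namespace AsymColouring

/-- The orbit of `x` under the permutations in `B`. -/
def orb {V : Type*} (B : Subgroup (Equiv.Perm V)) (x : V) : Set V := {y | ∃ b ∈ B, b x = y}

/-- The subgroup of those elements of `B` which preserve the colouring `c`. -/
def colourStab {V : Type*} (B : Subgroup (Equiv.Perm V)) (c : V → ℕ) : Subgroup (Equiv.Perm V) where
  carrier := {b | b ∈ B ∧ ∀ x, c (b x) = c x}
  one_mem' := ⟨B.one_mem, fun _ => rfl⟩
  mul_mem' := by
    rintro a b ⟨ha, ha'⟩ ⟨hb, hb'⟩
    exact ⟨B.mul_mem ha hb, fun x => by rw [Equiv.Perm.mul_apply, ha', hb']⟩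
  inv_mem' := by
    rintro a ⟨ha, ha'⟩
    refine ⟨B.inv_mem ha, fun x => ?_⟩
    simpa using (ha' (a⁻¹ x)).symm

/-! ### Orbits of permutation groups -/

section Orbits

variable {V : Type*} {B B' : Subgroup (Equiv.Perm V)}

lemma self_mem_orb (x : V) : x ∈ orb B x := ⟨1, B.one_mem, rfl⟩

lemma apply_mem_orb {b : Equiv.Perm V} (hb : b ∈ B) {x y : V} (hy : y ∈ orb B x) :
    b y ∈ orb B x := by
  obtain ⟨a, ha, rfl⟩ := hy
  exact ⟨b * a, B.mul_mem hb ha, rfl⟩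

lemma orb_eq_of_mem {x y : V} (hy : y ∈ orb B x) : orb B y = orb B x := by
  obtain ⟨a, ha, rfl⟩ := hy
  ext z
  constructor
  · rintro ⟨b, hb, rfl⟩
    exact ⟨b * a, B.mul_mem hb ha, rfl⟩
  · rintro ⟨b, hb, rfl⟩
    exact ⟨b * a⁻¹, B.mul_mem hb (B.inv_mem ha), by simp⟩

lemma orb_mono (h : B' ≤ B) (x : V) : orb B' x ⊆ orb B x := by
  rintro y ⟨b, hb, rfl⟩
  exact ⟨b, h hb, rfl⟩

lemma colourStab_le (c : V → ℕ) : colourStab B c ≤ B := fun _ h => h.1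

end Orbits

/-! ### Marking vertices to preserve a set-valued function -/

/-- Among a family of sets, at most `m` members suffice to separate all pairs of points of a set
`U` of size at most `m` which are separated by the whole family: take members whose indicator
vectors form a basis of the span of all indicator vectors in `U → ℚ`. -/
lemma exists_separating {V : Type*} {m : ℕ} (U O : Set V) (hU : U.encard ≤ m) (p : V → Set V) :
    ∃ T ⊆ O, T.encard ≤ m ∧ ∀ u ∈ U, ∀ v ∈ U,
      (∀ x ∈ T, (u ∈ p x ↔ v ∈ p x)) → ∀ x ∈ O, (u ∈ p x ↔ v ∈ p x) := by
  classical
  have hUfin : U.Finite := Set.finite_of_encard_le_coe hU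
  have : Fintype U := hUfin.fintype
  let f : V → (U → ℚ) := fun x u => if (u : V) ∈ p x then 1 else 0
  obtain ⟨b, hbs, hspan, hli⟩ := exists_linearIndependent ℚ (f '' O)
  obtain ⟨T, hTO, hT⟩ := Set.SurjOn.exists_bijOn_subset (f := f) (s := O) (t := b) hbs
  refine ⟨T, hTO, ?_, ?_⟩
  · have h1 : T.encard = b.encard := by
      rw [← hT.image_eq, hT.injOn.encard_image]
    have hbfin : b.Finite := hli.setFinite
    have : Fintype b := hbfin.fintype
    have h2 := hli.fintype_card_le_finrank
    rw [Module.finrank_fintype_fun_eq_card] at h2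
    rw [h1]
    refine le_trans ?_ hU
    rw [← Set.coe_fintypeCard, ← Set.coe_fintypeCard]
    exact_mod_cast h2
  · intro u hu v hv h x hx
    let φ : (U → ℚ) →ₗ[ℚ] ℚ := LinearMap.proj ⟨u, hu⟩ - LinearMap.proj ⟨v, hv⟩
    have hb : Submodule.span ℚ b ≤ LinearMap.ker φ := by
      rw [Submodule.span_le]
      intro g hg
      obtain ⟨y, hy, rfl⟩ := hT.surjOn hg
      simp [φ, f, h y hy]
    have hker : f x ∈ LinearMap.ker φ :=
      hb (hspan ▸ Submodule.subset_span (Set.mem_image_of_mem f hx))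
    simp only [LinearMap.mem_ker, LinearMap.sub_apply, LinearMap.proj_apply, φ, f] at hker
    by_cases h1 : u ∈ p x <;> by_cases h2 : v ∈ p x <;> simp [h1, h2] at hker ⊢

/-- If the equivariant set-valued function `p` is not constant on the orbit of `x₀`, then at most
`m` vertices of this orbit can be marked with distinct nonzero labels such that every element of
`B` fixing the marked vertices preserves the trace of `p` on some `B`-invariant set `U`, where this
trace is not constant on the orbit. -/
lemma exists_labels {V : Type*} {B : Subgroup (Equiv.Perm V)} {m : ℕ} {p : V → Set V}
    (hp : ∀ b ∈ B, ∀ x, p (b x) = b '' p x)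
    (hm : ∀ x, ∀ u ∈ p x, (orb B u).encard ≤ m) (x₀ : V)
    (hne : ∃ y ∈ orb B x₀, p y ≠ p x₀) :
    ∃ l : V → ℕ, (∀ x, l x ≤ m) ∧
      (∀ x ∈ orb B x₀, ∀ y ∈ orb B x₀, l x ≠ 0 → l x = l y → x = y) ∧
      ∃ U : Set V, (∀ b ∈ B, ∀ u, b u ∈ U ↔ u ∈ U) ∧ (∃ y ∈ orb B x₀, p y ∩ U ≠ p x₀ ∩ U) ∧
        ∀ b ∈ B, (∀ x ∈ orb B x₀, l x ≠ 0 → b x = x) →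
          ∀ x ∈ orb B x₀, p (b x) ∩ U = p x ∩ U := by
  classical
  obtain ⟨y, hy, hpy⟩ := hne
  -- a point `u` lying in exactly one of the two sets; its orbit serves as `U`
  obtain ⟨u, z, -, huz, hsep⟩ : ∃ u z, z ∈ orb B x₀ ∧ u ∈ p z ∧ ¬ (u ∈ p y ↔ u ∈ p x₀) := by
    by_contra hcon
    push Not at hcon
    apply hpy
    ext u
    constructor
    · intro h; exact (hcon u y hy h).1 h
    · intro h; exact (hcon u x₀ (self_mem_orb _) h).2 h
  have hU := hm z u huz
  obtain ⟨T, hTO, hTm, hT⟩ := exists_separating (orb B u) (orb B x₀) hU p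
  have hTfin : T.Finite := Set.finite_of_encard_le_coe hTm
  obtain ⟨g, hg, hginj⟩ := hTfin.exists_injOn_of_encard_le (t := Set.Icc 1 m) (by
    rw [← Finset.coe_Icc, Set.encard_coe_eq_coe_finsetCard]; simpa using hTm)
  have hgm : ∀ x ∈ T, 1 ≤ g x ∧ g x ≤ m := fun x hx => hg hx
  have hinv : ∀ b ∈ B, ∀ v, b v ∈ orb B u ↔ v ∈ orb B u := by
    intro b hb v
    refine ⟨fun h => ?_, fun h => apply_mem_orb hb h⟩
    have := apply_mem_orb (B.inv_mem hb) h
    simpa using this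
  refine ⟨fun x => if x ∈ T then g x else 0, ?_, ?_, orb B u, hinv, ⟨y, hy, ?_⟩, ?_⟩
  · intro x
    by_cases hx : x ∈ T
    · simpa [hx] using (hgm x hx).2
    · simp [hx]
  · intro x _ y _ h1 h2
    by_cases hx : x ∈ T
    · by_cases hy' : y ∈ T
      · simp only [hx, hy', if_true] at h2
        exact hginj hx hy' h2
      · simp only [hx, hy', if_true, if_false] at h2
        have := (hgm x hx).1
        omega
    · simp [hx] at h1
  · intro h
    apply hsep
    have := Set.ext_iff.1 h u
    simpa [self_mem_orb] using this
  · intro b hb hfix x hx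
    have hfix' : ∀ t ∈ T, b t = t := by
      intro t ht
      apply hfix t (hTO ht)
      have := (hgm t ht).1
      simp only [ht, if_true]
      omega
    -- `b` moves every point of `U` to one not separated from it
    have key : ∀ v ∈ orb B u, ∀ t ∈ orb B x₀, (b v ∈ p t ↔ v ∈ p t) := by
      intro v hv
      apply hT _ (apply_mem_orb hb hv) _ hv
      intro t ht
      conv_lhs => rw [← hfix' t ht, hp b hb]
      exact b.injective.mem_set_image
    ext w
    simp only [Set.mem_inter_iff, and_congr_left_iff]
    intro hw
    obtain ⟨v, rfl⟩ := b.surjective w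
    have hv := (hinv b hb v).1 hw
    rw [hp b hb, b.injective.mem_set_image, key v hv x hx]

/-- Marking with `k * m` labels: if every orbit on which `p` varies has fewer than `2 ^ (k + 1)`
elements, then the elements of `B` preserving suitable marks preserve `p`. Each batch of `m`
labels at least halves the orbits on which `p` still varies. The label `0` means unmarked; marked
vertices are fixed by the marks, and only vertices in orbits on which `p` varies are marked. -/
lemma exists_marks {V : Type*} {m : ℕ} {p : V → Set V} (k : ℕ) :
    ∀ B : Subgroup (Equiv.Perm V), (∀ b ∈ B, ∀ x, p (b x) = b '' p x) →
    (∀ x, ∀ u ∈ p x, (orb B u).encard ≤ m) →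
    (∀ x, (∀ y ∈ orb B x, p y = p x) ∨ ((orb B x).Finite ∧ (orb B x).ncard < 2 ^ (k + 1))) →
    ∃ mark : V → ℕ, (∀ x, mark x ≤ k * m) ∧
      (∀ x, mark x ≠ 0 → ∃ y ∈ orb B x, p y ≠ p x) ∧
      (∀ x, mark x ≠ 0 → ∀ b ∈ colourStab B mark, b x = x) ∧
      ∀ b ∈ colourStab B mark, ∀ x, p (b x) = p x := by
  classical
  induction k with
  | zero =>
    intro B hp hm hB
    refine ⟨fun _ => 0, by simp, by simp, by simp, ?_⟩
    intro b hb x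
    rcases hB x with h | ⟨hfin, hcard⟩
    · exact h _ ⟨b, hb.1, rfl⟩
    · have h1 : (orb B x).ncard ≤ 1 := by omega
      have := (Set.ncard_le_one hfin).1 h1 (b x) ⟨b, hb.1, rfl⟩ x (self_mem_orb x)
      rw [this]
  | succ k ih =>
    intro B hp hm hB
    -- labels for each orbit, chosen as a function of the orbit (as a set)
    have hlab : ∀ O : Set V, ∃ l : V → ℕ, ∀ x₀, O = orb B x₀ → (∃ y ∈ orb B x₀, p y ≠ p x₀) →
        (∀ x, l x ≤ m) ∧
        (∀ x ∈ O, ∀ y ∈ O, l x ≠ 0 → l x = l y → x = y) ∧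
        ∃ U : Set V, (∀ b ∈ B, ∀ u, b u ∈ U ↔ u ∈ U) ∧ (∃ y ∈ O, ∃ z ∈ O, p y ∩ U ≠ p z ∩ U) ∧
          ∀ b ∈ B, (∀ x ∈ O, l x ≠ 0 → b x = x) → ∀ x ∈ O, p (b x) ∩ U = p x ∩ U := by
      intro O
      by_cases hO : ∃ x₀, O = orb B x₀ ∧ ∃ y ∈ orb B x₀, p y ≠ p x₀
      · obtain ⟨x₀, rfl, hy⟩ := hO
        obtain ⟨l, h1, h2, U, h3, ⟨y, hy, h4⟩, h5⟩ := exists_labels hp hm x₀ hy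
        exact ⟨l, fun _ _ _ => ⟨h1, h2, U, h3, ⟨y, hy, x₀, self_mem_orb _, h4⟩, h5⟩⟩
      · exact ⟨fun _ => 0, fun x₀ h1 h2 => (hO ⟨x₀, h1, h2⟩).elim⟩
    choose L hL using hlab
    let new : V → ℕ := fun x => if ∃ y ∈ orb B x, p y ≠ p x then L (orb B x) x else 0
    have hvar : ∀ x, ∀ y ∈ orb B x, (∃ z ∈ orb B x, p z ≠ p x) → ∃ z ∈ orb B y, p z ≠ p y := by
      intro x y hy ⟨z, hz, hpz⟩
      rw [orb_eq_of_mem hy]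
      by_cases h : p x = p y
      · exact ⟨z, hz, h ▸ hpz⟩
      · exact ⟨x, self_mem_orb x, h⟩
    have hnew_le : ∀ x, new x ≤ m := by
      intro x
      by_cases h : ∃ y ∈ orb B x, p y ≠ p x
      · simpa only [new, h, if_true] using (hL _ x rfl h).1 x
      · simp only [new, h, if_false]; omega
    have hnew_var : ∀ x, new x ≠ 0 → ∃ y ∈ orb B x, p y ≠ p x := by
      intro x hx
      by_contra h
      simp [new, h] at hx
    have hnew_eq : ∀ x, (∃ z ∈ orb B x, p z ≠ p x) → ∀ y ∈ orb B x, new y = L (orb B x) y := by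
      intro x hx y hy
      have := hvar x y hy hx
      change (if _ then _ else _) = _
      rw [if_pos this, orb_eq_of_mem hy]
    have hnew_fix : ∀ x, new x ≠ 0 → ∀ b ∈ colourStab B new, b x = x := by
      intro x hx b hb
      have hv := hnew_var x hx
      have hbx : b x ∈ orb B x := ⟨b, hb.1, rfl⟩
      refine ((hL _ x rfl hv).2.1 x (self_mem_orb x) (b x) hbx ?_ ?_).symm
      · rwa [← hnew_eq x hv x (self_mem_orb x)]
      · rw [← hnew_eq x hv x (self_mem_orb x), ← hnew_eq x hv _ hbx, hb.2 x]
    have hle : colourStab B new ≤ B := colourStab_le new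
    obtain ⟨mark, hm1, hm2, hm3, hm4⟩ := ih (colourStab B new) (fun b hb => hp b hb.1)
      (fun x u hu => (Set.encard_le_encard (orb_mono hle u)).trans (hm x u hu)) (by
        intro x
        by_cases hx : ∃ y ∈ orb B x, p y ≠ p x
        swap
        · left
          push Not at hx
          exact fun y hy => hx y (orb_mono hle x hy)
        right
        obtain ⟨hfin, hcard⟩ : (orb B x).Finite ∧ (orb B x).ncard < 2 ^ (k + 1 + 1) := by
          rcases hB x with h | h
          · obtain ⟨y, hy, hpy⟩ := hx
            exact (hpy (h y hy)).elim
          · exact h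
        refine ⟨hfin.subset (orb_mono hle x), ?_⟩
        obtain ⟨-, -, U, hU, hUne, hUfix⟩ := hL _ x rfl hx
        -- the class of `x` in its orbit, by traces of `p` on `U`
        have hsub : orb (colourStab B new) x ⊆ {y ∈ orb B x | p y ∩ U = p x ∩ U} := by
          rintro y ⟨b, hb, rfl⟩
          refine ⟨⟨b, hb.1, rfl⟩, ?_⟩
          refine hUfix b hb.1 (fun t ht htl => ?_) x (self_mem_orb x)
          exact hnew_fix t (by rwa [hnew_eq x hx t ht]) b hb
        obtain ⟨z, hz, hpz⟩ : ∃ z ∈ orb B x, p z ∩ U ≠ p x ∩ U := by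
          by_contra hcon
          push Not at hcon
          obtain ⟨y, hy, z, hz, hyz⟩ := hUne
          exact hyz ((hcon y hy).trans (hcon z hz).symm)
        obtain ⟨a, ha, rfl⟩ := hz
        -- the translate by `a` of that class is disjoint from it
        have hdisj : Disjoint {y ∈ orb B x | p y ∩ U = p x ∩ U}
            (a '' {y ∈ orb B x | p y ∩ U = p x ∩ U}) := by
          rw [Set.disjoint_left]
          rintro y ⟨hy, hpy⟩ ⟨w, ⟨hw, hpw⟩, rfl⟩
          apply hpz
          rw [← hpy, hp a ha, hp a ha]
          have haU : a '' U = U := by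
            ext v
            obtain ⟨v, rfl⟩ := a.surjective v
            rw [a.injective.mem_set_image, hU a ha]
          rw [← haU, ← Set.image_inter a.injective, ← Set.image_inter a.injective, hpw]
        have hcl : {y ∈ orb B x | p y ∩ U = p x ∩ U}.Finite := hfin.subset fun y hy => hy.1
        have h2 : 2 * {y ∈ orb B x | p y ∩ U = p x ∩ U}.ncard ≤ (orb B x).ncard := by
          have h3 := Set.ncard_union_eq hdisj hcl (hcl.image _)
          rw [Set.ncard_image_of_injective _ a.injective] at h3
          rw [two_mul, ← h3]
          apply Set.ncard_le_ncard _ hfin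
          rintro y (hy | ⟨w, hw, rfl⟩)
          · exact hy.1
          · exact apply_mem_orb ha hw.1
        have h4 := Set.ncard_le_ncard hsub hcl
        rw [pow_succ] at hcard
        omega)
    have hdis : ∀ x, new x ≠ 0 → mark x = 0 := by
      intro x hx
      by_contra h
      obtain ⟨y, ⟨b, hb, rfl⟩, hy⟩ := hm2 x h
      exact hy (by rw [hnew_fix x hx b hb])
    let M : V → ℕ := fun x => if new x ≠ 0 then k * m + new x else mark x
    have hM1 : ∀ x, new x = M x - k * m := by
      intro x
      by_cases h : new x = 0
      · have := hm1 x
        simp only [M, h, ne_eq, not_true, if_false]; omega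
      · simp only [M, ne_eq, h, not_false_iff, if_true]; omega
    have hM2 : ∀ x, mark x = if M x ≤ k * m then M x else 0 := by
      intro x
      by_cases h : new x = 0
      · have := hm1 x
        simp [M, h, this]
      · have := hdis x h
        simp [M, h, this]
    have href : colourStab B M ≤ colourStab (colourStab B new) mark := by
      rintro b ⟨hb, hbM⟩
      exact ⟨⟨hb, fun x => by rw [hM1, hM1, hbM]⟩, fun x => by rw [hM2, hM2, hbM]⟩
    refine ⟨M, ?_, ?_, ?_, fun b hb => hm4 b (href hb)⟩
    · intro x
      have h1 := hnew_le x
      have h2 := hm1 x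
      rw [add_mul, one_mul]
      by_cases h : new x = 0
      · simp only [M, h, ne_eq, not_true, if_false]; omega
      · simp only [M, ne_eq, h, not_false_iff, if_true]; omega
    · intro x hx
      by_cases h : new x = 0
      · obtain ⟨y, hy, hpy⟩ := hm2 x (by simpa [M, h] using hx)
        exact ⟨y, orb_mono hle x hy, hpy⟩
      · exact hnew_var x h
    · intro x hx b hb
      by_cases h : new x = 0
      · exact hm3 x (by simpa [M, h] using hx) b (href hb)
      · exact hnew_fix x h b (href hb).1

/-! ### Levels of a rooted graph and the recursion over levels -/

section Graph

variable {V : Type*} {G : SimpleGraph V} {r : V}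

/-- The permutations which are automorphisms of `G` fixing the root `r`. -/
def rootedAut (G : SimpleGraph V) (r : V) : Subgroup (Equiv.Perm V) where
  carrier := {b | (∀ u v, G.Adj (b u) (b v) ↔ G.Adj u v) ∧ b r = r}
  one_mem' := ⟨fun _ _ => Iff.rfl, rfl⟩
  mul_mem' := by
    rintro a b ⟨ha, ha'⟩ ⟨hb, hb'⟩
    exact ⟨fun u v => by rw [Equiv.Perm.mul_apply, Equiv.Perm.mul_apply, ha, hb],
      by rw [Equiv.Perm.mul_apply, hb', ha']⟩
  inv_mem' := by
    rintro a ⟨ha, ha'⟩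
    refine ⟨fun u v => ?_, ?_⟩
    · simpa using (ha (a⁻¹ u) (a⁻¹ v)).symm
    · rw [Equiv.Perm.inv_eq_iff_eq, ha']

lemma dist_apply_le (hconn : G.Connected) {b : Equiv.Perm V} (hb : b ∈ rootedAut G r) (x : V) :
    G.dist r (b x) ≤ G.dist r x := by
  obtain ⟨w, hw⟩ := hconn.exists_walk_length_eq_dist r x
  let f : G →g G := ⟨b, fun {u v} h => (hb.1 u v).2 h⟩
  have h := SimpleGraph.dist_le (w.map f)
  rw [SimpleGraph.Walk.length_map, hw] at h
  have hr : f r = r := hb.2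
  rw [hr] at h
  exact h

lemma dist_apply (hconn : G.Connected) {b : Equiv.Perm V} (hb : b ∈ rootedAut G r) (x : V) :
    G.dist r (b x) = G.dist r x := by
  refine le_antisymm (dist_apply_le hconn hb x) ?_
  have := dist_apply_le hconn ((rootedAut G r).inv_mem hb) (b x)
  simpa using this

/-- The neighbours on level `n` of a vertex on level `n + 1` (and `∅` for all other vertices),
where levels are distances from the root `r`. -/
def parents (G : SimpleGraph V) (r : V) (n : ℕ) (x : V) : Set V :=
  {u | G.Adj u x ∧ G.dist r u = n ∧ G.dist r x = n + 1}

lemma parents_apply (hconn : G.Connected) {b : Equiv.Perm V} (hb : b ∈ rootedAut G r) (n : ℕ)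
    (x : V) : parents G r n (b x) = b '' parents G r n x := by
  ext u
  obtain ⟨u, rfl⟩ := b.surjective u
  rw [b.injective.mem_set_image]
  simp only [parents, Set.mem_ofPred_eq, hb.1, dist_apply hconn hb]

lemma parents_nonempty (hconn : G.Connected) {n : ℕ} {x : V} (hx : G.dist r x = n + 1) :
    (parents G r n x).Nonempty := by
  obtain ⟨w, hw⟩ := hconn.exists_walk_length_eq_dist x r
  rw [SimpleGraph.dist_comm, hx] at hw
  cases w with
  | nil => simp at hw
  | @cons _ u _ h q =>
    refine ⟨u, h.symm, ?_, hx⟩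
    have h1 : G.dist r u ≤ n := by
      rw [SimpleGraph.dist_comm]
      have := SimpleGraph.dist_le q
      simp at hw
      omega
    have h2 := hconn.dist_triangle (u := r) (v := u) (w := x)
    rw [SimpleGraph.dist_eq_one_iff_adj.2 h.symm] at h2
    omega

lemma dist_le_add_one (hconn : G.Connected) {u x : V} (h : G.Adj u x) :
    G.dist r x ≤ G.dist r u + 1 := by
  have h2 := hconn.dist_triangle (u := r) (v := u) (w := x)
  rwa [SimpleGraph.dist_eq_one_iff_adj.2 h] at h2

lemma finite_ball [∀ v : V, Fintype (G.neighborSet v)] (hconn : G.Connected) (n : ℕ) :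
    {x | G.dist r x ≤ n}.Finite := by
  induction n with
  | zero =>
    refine (Set.finite_singleton r).subset fun x hx => ?_
    have : G.dist r x = 0 := Nat.le_zero.1 hx
    exact (hconn.dist_eq_zero_iff.1 this).symm
  | succ n ih =>
    refine (ih.union (ih.biUnion fun u _ => (G.neighborSet u).toFinite)).subset fun x hx => ?_
    rcases Nat.lt_or_ge n (G.dist r x) with h | h
    · have hx' : G.dist r x = n + 1 := le_antisymm hx h
      obtain ⟨u, hu⟩ := parents_nonempty hconn hx'
      refine Or.inr (Set.mem_biUnion (x := u) ?_ hu.1)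
      exact hu.2.1.le
    · exact Or.inl h

/-- By infinite motion, an automorphism preserving the parent sets of all vertices on level `n + 1`
fixes the ball of radius `n`: replacing it by the identity outside of that ball gives an
automorphism moving only finitely many vertices. -/
lemma fixes_ball [∀ v : V, Fintype (G.neighborSet v)] (hconn : G.Connected)
    (hmotion : ∀ φ : G ≃g G, (∀ v, φ v = v) ∨ {v : V | φ v ≠ v}.Infinite)
    {b : Equiv.Perm V} (hb : b ∈ rootedAut G r) {n : ℕ}
    (hpar : ∀ x, parents G r n (b x) = parents G r n x) {x : V} (hx : G.dist r x ≤ n) :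
    b x = x := by
  classical
  have hd := dist_apply hconn hb
  let e : Equiv.Perm V := Equiv.Perm.ofSubtype
    (b.subtypePerm (p := fun v => G.dist r v ≤ n) (fun v => by rw [hd v]))
  have he1 : ∀ v, G.dist r v ≤ n → e v = b v := by
    intro v hv
    exact Equiv.Perm.ofSubtype_apply_of_mem (p := fun v => G.dist r v ≤ n) _ hv
  have he2 : ∀ v, ¬ G.dist r v ≤ n → e v = v := by
    intro v hv
    exact Equiv.Perm.ofSubtype_apply_of_not_mem (p := fun v => G.dist r v ≤ n) _ hv
  have hmix : ∀ u v, G.dist r u ≤ n → ¬ G.dist r v ≤ n → (G.Adj (b u) v ↔ G.Adj u v) := by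
    intro u v hu hv
    have hlev : ∀ w, G.dist r w ≤ n → G.Adj w v → G.dist r w = n ∧ G.dist r v = n + 1 := by
      intro w hw h
      have := dist_le_add_one (r := r) hconn h
      omega
    have key : b u ∈ parents G r n v ↔ u ∈ parents G r n v := by
      conv_lhs => rw [← hpar v, parents_apply hconn hb, b.injective.mem_set_image]
    constructor
    · intro h
      exact (key.1 ⟨h, hlev _ (by rwa [hd]) h⟩).1
    · intro h
      exact (key.2 ⟨h, hlev _ hu h⟩).1
  let φ : G ≃g G := ⟨e, by
    intro u v
    by_cases hu : G.dist r u ≤ n <;> by_cases hv : G.dist r v ≤ n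
    · rw [he1 u hu, he1 v hv, hb.1]
    · rw [he1 u hu, he2 v hv, hmix u v hu hv]
    · rw [he2 u hu, he1 v hv, G.adj_comm, hmix v u hv hu, G.adj_comm]
    · rw [he2 u hu, he2 v hv]⟩
  have hφ : ∀ v, φ v = v := by
    refine (hmotion φ).resolve_right fun hinf => hinf ?_
    refine (finite_ball (r := r) hconn n).subset fun v hv => ?_
    by_contra h
    exact hv (he2 v h)
  rw [← he1 x hx]
  exact hφ x

/-- The invariant of the recursion over levels: `A` consists of automorphisms fixing the root and
all vertices on levels below `n`, and its orbits on level `n` have at most `m` elements. -/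
structure Good (G : SimpleGraph V) (r : V) (m n : ℕ) (A : Subgroup (Equiv.Perm V)) : Prop where
  le_aut : A ≤ rootedAut G r
  fixes : ∀ a ∈ A, ∀ x, G.dist r x < n → a x = x
  small : ∀ x, G.dist r x = n → (orb A x).encard ≤ m

/-- A set with at most `m * m` elements can be coloured with `m` colours, each used at most `m`
times. -/
lemma exists_balanced {m : ℕ} (hm : 0 < m) (P : Set V) (hP : P.encard ≤ (m * m : ℕ)) :
    ∃ f : V → ℕ, (∀ x, f x < m) ∧ ∀ i, {y ∈ P | f y = i}.encard ≤ m := by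
  have hfin : P.Finite := Set.finite_of_encard_le_coe hP
  obtain ⟨g, hg, hginj⟩ := hfin.exists_injOn_of_encard_le (t := Set.Iio (m * m)) (by
    rw [← Finset.coe_Iio, Set.encard_coe_eq_coe_finsetCard]; simpa using hP)
  have hg' : ∀ x ∈ P, g x < m * m := fun x hx => hg hx
  refine ⟨fun x => g x % m, fun x => Nat.mod_lt _ hm, fun i => ?_⟩
  have h1 : (Set.Iio m).encard = m := by
    rw [← Finset.coe_Iio, Set.encard_coe_eq_coe_finsetCard]; simp
  rw [← h1]
  refine Set.encard_le_encard_of_injOn (f := fun x => g x / m) ?_ ?_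
  · rintro x ⟨hx, -⟩
    exact Nat.div_lt_of_lt_mul (hg' x hx)
  · rintro x ⟨hx, hxi⟩ y ⟨hy, hyi⟩ hxy
    apply hginj hx hy
    simp only at hxi hyi hxy
    rw [← Nat.div_add_mod (g x) m, ← Nat.div_add_mod (g y) m, hxi, hyi, hxy]

/-- Given the invariant on level `n`, level `n + 1` can be coloured such that the invariant holds
on level `n + 1`. Colours below `m` are default colours, used at most `m` times among vertices with
the same parents; the others are the marks which make all of level `n` fixed. -/
lemma good_succ [∀ v : V, Fintype (G.neighborSet v)] (hconn : G.Connected)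
    (hmotion : ∀ φ : G ≃g G, (∀ v, φ v = v) ∨ {v : V | φ v ≠ v}.Infinite)
    {Δ m k n : ℕ} (hdeg : ∀ v : V, G.degree v ≤ Δ) (hm : 0 < m) (hmΔ : Δ ≤ m * m)
    (hk : m * Δ < 2 ^ (k + 1)) {A : Subgroup (Equiv.Perm V)} (hA : Good G r m n A) :
    ∃ c : V → ℕ, (∀ x, c x < m + k * m) ∧ (∀ x, G.dist r x ≠ n + 1 → c x = 0) ∧
      Good G r m (n + 1) (colourStab A c) := by
  classical
  have hd : ∀ a ∈ A, ∀ x, G.dist r (a x) = G.dist r x :=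
    fun a ha => dist_apply hconn (hA.le_aut ha)
  have hnbr : ∀ u, (G.neighborSet u).encard ≤ Δ := by
    intro u
    rw [← Set.coe_fintypeCard, G.card_neighborSet_eq_degree]
    exact_mod_cast hdeg u
  obtain ⟨mark, hm1, hm2, hm3, hm4⟩ := exists_marks (m := m) (p := parents G r n) k A
    (fun a ha => parents_apply hconn (hA.le_aut ha) n) (fun x u hu => hA.small u hu.2.1) (by
      intro x
      by_cases hx : G.dist r x = n + 1
      · right
        obtain ⟨u, hu⟩ := parents_nonempty hconn hx
        have hsub : orb A x ⊆ ⋃ v ∈ orb A u, G.neighborSet v := by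
          rintro y ⟨a, ha, rfl⟩
          refine Set.mem_biUnion (x := a u) ⟨a, ha, rfl⟩ ?_
          exact ((hA.le_aut ha).1 u x).2 hu.1
        have horb := hA.small u hu.2.1
        have hfin : (orb A u).Finite := Set.finite_of_encard_le_coe horb
        have hle : (orb A x).encard ≤ (m * Δ : ℕ) := by
          refine (Set.encard_le_encard hsub).trans ((hfin.encard_biUnion_le _).trans ?_)
          rw [finsum_mem_eq_finite_toFinset_sum _ hfin]
          refine (Finset.sum_le_card_nsmul _ _ (Δ : ℕ∞) fun v _ => hnbr v).trans ?_
          rw [nsmul_eq_mul, ← hfin.encard_eq_coe_toFinset_card, Nat.cast_mul]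
          gcongr
        rw [Set.encard_le_coe_iff_finite_ncard_le] at hle
        exact ⟨hle.1, hle.2.trans_lt hk⟩
      · left
        rintro y ⟨a, ha, rfl⟩
        ext u
        simp [parents, hd a ha, hx])
  -- default colours, chosen as a function of the parent set
  have hdef : ∀ Q : Set V, ∃ f : V → ℕ, Q.Nonempty →
      (∀ x, f x < m) ∧ ∀ i, {y ∈ {y | parents G r n y = Q} | f y = i}.encard ≤ m := by
    intro Q
    by_cases hQ : Q.Nonempty
    · obtain ⟨u, hu⟩ := hQ
      obtain ⟨f, hf⟩ := exists_balanced hm {y | parents G r n y = Q} (by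
        refine le_trans (Set.encard_le_encard (t := G.neighborSet u) ?_)
          ((hnbr u).trans (by exact_mod_cast hmΔ))
        rintro y rfl
        exact hu.1)
      exact ⟨f, fun _ => hf⟩
    · exact ⟨fun _ => 0, fun h => (hQ h).elim⟩
  choose F hF using hdef
  let c : V → ℕ := fun x => if G.dist r x = n + 1 then
    (if mark x ≠ 0 then m - 1 + mark x else F (parents G r n x) x) else 0
  have hFlt : ∀ x, G.dist r x = n + 1 → F (parents G r n x) x < m :=
    fun x hx => (hF _ (parents_nonempty hconn hx)).1 x
  have hmark0 : ∀ x, G.dist r x ≠ n + 1 → mark x = 0 := by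
    intro x hx
    by_contra h
    obtain ⟨y, ⟨a, ha, rfl⟩, hy⟩ := hm2 x h
    apply hy
    ext u
    simp [parents, hd a ha, hx]
  have hmark : ∀ x, mark x = c x - (m - 1) := by
    intro x
    by_cases hx : G.dist r x = n + 1
    · have := hFlt x hx
      by_cases h : mark x = 0
      · simp only [c, hx, h, if_true, ne_eq, not_true, if_false]; omega
      · simp only [c, hx, h, if_true, ne_eq, not_false_iff]; omega
    · simp [c, hx, hmark0 x hx]
  have hle : colourStab A c ≤ colourStab A mark := by
    rintro a ⟨ha, hac⟩
    exact ⟨ha, fun x => by rw [hmark, hmark, hac]⟩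
  refine ⟨c, ?_, fun x hx => by simp [c, hx], (colourStab_le c).trans hA.le_aut, ?_, ?_⟩
  · intro x
    have h1 := hm1 x
    by_cases hx : G.dist r x = n + 1
    · have := hFlt x hx
      by_cases h : mark x = 0
      · simp only [c, hx, h, if_true, ne_eq, not_true, if_false]; omega
      · simp only [c, hx, h, if_true, ne_eq, not_false_iff]; omega
    · simp only [c, hx, if_false]; omega
  · intro a ha x hx
    exact fixes_ball hconn hmotion (hA.le_aut ha.1) (hm4 a (hle ha)) (Nat.lt_succ_iff.1 hx)
  · intro x hx
    by_cases h : mark x = 0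
    · refine le_trans (Set.encard_le_encard ?_)
        ((hF _ (parents_nonempty hconn hx)).2 (F (parents G r n x) x))
      rintro y ⟨a, ha, rfl⟩
      have hpar : parents G r n (a x) = parents G r n x := hm4 a (hle ha) x
      refine ⟨hpar, ?_⟩
      have hc := ha.2 x
      have hma : mark (a x) = 0 := by rw [(hle ha).2 x, h]
      simpa [c, hx, hd a ha.1, h, hma, hpar] using hc
    · have : orb (colourStab A c) x ⊆ {x} := by
        rintro y ⟨a, ha, rfl⟩
        exact hm3 x h a (hle ha)
      refine (Set.encard_le_encard this).trans ?_
      rw [Set.encard_singleton]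
      exact_mod_cast hm

lemma good_zero (hconn : G.Connected) {m : ℕ} (hm : 0 < m) : Good G r m 0 (rootedAut G r) := by
  refine ⟨le_rfl, fun _ _ _ h => (Nat.not_lt_zero _ h).elim, fun x hx => ?_⟩
  obtain rfl := hconn.dist_eq_zero_iff.1 hx
  have : orb (rootedAut G r) r ⊆ {r} := by
    rintro y ⟨a, ha, rfl⟩
    exact ha.2
  refine (Set.encard_le_encard this).trans ?_
  rw [Set.encard_singleton]
  exact_mod_cast hm

/-- The asymmetric colouring with `m + k * m + 1` colours, where the last one is reserved for the
root. -/
lemma exists_asymmetric [∀ v : V, Fintype (G.neighborSet v)] (hconn : G.Connected)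
    (hmotion : ∀ φ : G ≃g G, (∀ v, φ v = v) ∨ {v : V | φ v ≠ v}.Infinite)
    {Δ m k : ℕ} (hdeg : ∀ v : V, G.degree v ≤ Δ) (hm : 0 < m) (hmΔ : Δ ≤ m * m)
    (hk : m * Δ < 2 ^ (k + 1)) :
    ∃ c : V → ℕ, (∀ x, c x < m + k * m + 1) ∧
      ∀ φ : G ≃g G, (∀ v, c (φ v) = c v) → ∀ v, φ v = v := by
  classical
  obtain ⟨r⟩ := hconn.nonempty
  choose col hcol1 hcol2 hcol3 using fun (n : ℕ) (A : {A // Good G r m n A}) =>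
    good_succ hconn hmotion hdeg hm hmΔ hk A.2
  -- the groups obtained by colouring one level after the other
  let A : ∀ n, {A // Good G r m n A} := fun n =>
    Nat.rec ⟨rootedAut G r, good_zero hconn hm⟩ (fun n A => ⟨colourStab A.1 (col n A), hcol3 n A⟩) n
  let c : V → ℕ := fun x => if G.dist r x = 0 then m + k * m
    else col (G.dist r x - 1) (A (G.dist r x - 1)) x
  have hc : ∀ n x, G.dist r x = n + 1 → c x = col n (A n) x := by
    intro n x hx
    obtain rfl : n = G.dist r x - 1 := by omega
    exact if_neg (by omega)
  refine ⟨c, fun x => ?_, fun φ hφ v => ?_⟩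
  · by_cases hx : G.dist r x = 0
    · simp only [c, hx, if_true]
      exact Nat.lt_succ_self _
    · simp only [c, hx, if_false]
      exact (hcol1 _ _ x).trans (Nat.lt_succ_self _)
  · have hroot : φ r = r := by
      by_contra h
      have h1 : G.dist r (φ r) ≠ 0 := fun h0 => h (hconn.dist_eq_zero_iff.1 h0).symm
      have h2 := hφ r
      have h3 := hcol1 (G.dist r (φ r) - 1) (A (G.dist r (φ r) - 1)) (φ r)
      simp only [c, h1, if_false, SimpleGraph.dist_self, if_true] at h2
      omega
    have hA0 : φ.toEquiv ∈ rootedAut G r := ⟨fun u v => φ.map_rel_iff, hroot⟩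
    have hmem : ∀ n, φ.toEquiv ∈ (A n).1 := by
      intro n
      induction n with
      | zero => exact hA0
      | succ n ih =>
        refine ⟨ih, fun x => ?_⟩
        have hdx : G.dist r (φ.toEquiv x) = G.dist r x := dist_apply hconn hA0 x
        by_cases hx : G.dist r x = n + 1
        · have h := hφ x
          rw [hc n x hx, hc n (φ x) (hdx.trans hx)] at h
          exact h
        · rw [hcol2 n (A n) x hx, hcol2 n (A n) _ (by rwa [hdx])]
    exact (A (G.dist r v + 1)).2.fixes _ (hmem _) v (Nat.lt_succ_self _)

end Graph

end AsymColouring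

/-- A connected graph with infinite motion and maximal degree `Δ ≥ 2` has an
asymmetric colouring with at most `1 + (5/2 + 3/2 * log₂ Δ) * ⌈√Δ⌉` colours. -/
theorem stmt_0 {V : Type*} (G : SimpleGraph V) [∀ v : V, Fintype (G.neighborSet v)]
    (Δ : ℕ) (hΔ : 2 ≤ Δ) (hdeg : ∀ v : V, G.degree v ≤ Δ) (hconn : G.Connected)
    (hmotion : ∀ φ : G ≃g G, (∀ v, φ v = v) ∨ {v : V | φ v ≠ v}.Infinite) :
    ∃ c : V → ℕ, (Set.range c).Finite ∧
      ((Set.range c).ncard : ℝ) ≤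
        1 + (5 / 2 + 3 / 2 * Real.logb 2 Δ) * (⌈Real.sqrt Δ⌉₊ : ℝ) ∧
      ∀ φ : G ≃g G, (∀ v, c (φ v) = c v) → ∀ v, φ v = v := by
  have hΔ' : (2 : ℝ) ≤ Δ := by exact_mod_cast hΔ
  have hs1 : 1 ≤ Real.sqrt Δ := Real.one_le_sqrt.2 (by linarith)
  have hss : Real.sqrt Δ * Real.sqrt Δ = Δ := Real.mul_self_sqrt (by linarith)
  set m := ⌈Real.sqrt Δ⌉₊ with hmdef
  have hsm : Real.sqrt Δ ≤ m := Nat.le_ceil _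
  have hms : (m : ℝ) ≤ 2 * Real.sqrt Δ := by
    have := Nat.ceil_lt_add_one (Real.sqrt_nonneg Δ)
    linarith
  have hm : 0 < m := Nat.ceil_pos.2 (by linarith)
  have hmΔ : Δ ≤ m * m := by
    have : (Δ : ℝ) ≤ m * m := by nlinarith
    exact_mod_cast this
  have hmΔ0 : m * Δ ≠ 0 := by positivity
  obtain ⟨c, hc, hasym⟩ := AsymColouring.exists_asymmetric (k := Nat.log 2 (m * Δ)) hconn hmotion hdeg hm hmΔ
    (Nat.lt_pow_succ_log_self (by norm_num) _)
  have hsub : Set.range c ⊆ Finset.range (m + Nat.log 2 (m * Δ) * m + 1) := by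
    rintro _ ⟨x, rfl⟩
    simpa using hc x
  refine ⟨c, (Finset.finite_toSet _).subset hsub, ?_, hasym⟩
  have h1 : (Set.range c).ncard ≤ m + Nat.log 2 (m * Δ) * m + 1 := by
    have := Set.ncard_le_ncard hsub (Finset.finite_toSet _)
    rwa [Set.ncard_coe_finset, Finset.card_range] at this
  -- `m Δ ≤ 2 Δ ^ (3/2)`, so there are at most `1 + 3/2 log₂ Δ` batches of marks
  have h2 : (Nat.log 2 (m * Δ) : ℝ) ≤ 1 + 3 / 2 * Real.logb 2 Δ := by
    have hpow : (2 : ℝ) ^ Nat.log 2 (m * Δ) ≤ m * Δ := by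
      exact_mod_cast Nat.pow_log_le_self 2 hmΔ0
    have hle : (2 : ℝ) ^ Nat.log 2 (m * Δ) ≤ 2 * Real.sqrt Δ * Δ :=
      hpow.trans (by gcongr)
    have h3 := Real.logb_le_logb_of_le (b := 2) (by norm_num) (by positivity) hle
    rw [Real.logb_pow, Real.logb_self_eq_one (by norm_num), mul_one,
      Real.logb_mul (by positivity) (by positivity), Real.logb_mul (by norm_num) (by positivity),
      Real.logb_self_eq_one (by norm_num), Real.sqrt_eq_rpow,
      Real.logb_rpow_eq_mul_logb_of_pos (by positivity)] at h3
    linarith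
  have h4 : ((Set.range c).ncard : ℝ) ≤ m + Nat.log 2 (m * Δ) * m + 1 := by exact_mod_cast h1
  have h5 : (0 : ℝ) ≤ m := Nat.cast_nonneg m
  nlinarith [mul_le_mul_of_nonneg_right h2 h5]
end

section
/- Let $\Gamma$ be a group acting on two finite sets $\Omega$ and $\Omega'$. Suppose that the pointwise stabiliser of $\Omega'$ in $\Gamma$ is contained in the pointwise stabiliser of $\Omega$ in $\Gamma$. Then there exists a subset $S \subseteq \Omega$ such that $|S| \leq \tfrac{3|\Omega'|}{2}$ and the pointwise stabiliser of $S$ in $\Gamma$ equals the pointwise stabiliser of $\Omega$ in $\Gamma$. -/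
/-!
Call a set of points of `Ω` a base if its pointwise stabiliser is the kernel of the action on `Ω`.
For `n = |Ω'|`, a base of size at most `(3 * n - 4) / 2` (`baseBound n`) is found by induction on
`n` (`boundHolds`), for finite `G`; the given group may be replaced by the finite group it induces.
For `n ≤ 4` it suffices that each new base point can at least halve the group, whose order on `Ω`
is at most `n!`.

Let `n ≥ 5`. If `G` does not induce the alternating group on `Ω'`, one point is saved
(`hasBase_of_not_alternating`). If it does, then either some point stabiliser `G_ω` does not, and
`ω` together with a base for `G_ω` will do, or all of them do, so the group induced on `Ω` has
order at most two and one point suffices.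

The saving of one point is an easy computation from the induction hypothesis when `G` is
intransitive on `Ω'` (an orbit and its complement), or transitive but imprimitive (the blocks, and
the action on the set of blocks). When `G` is primitive, Bochert's argument (`bochert`) gives a
base `Δ ⊆ Ω'` for the action on `Ω'` with `k = |Δ| ≤ n / 2`. By induction the setwise stabiliser
`K` of `Δ` has a base on `Ω` of size at most `baseBound k`. The stabiliser `X` of that base meets
`K` in the kernel, so it induces on `Ω` a group of order `q ≤ n.choose k`. It remains to find a
small base for `X`, and this is `exists_base_sixteen_pow`: there is a base of size `c` with
`16 ^ c ≤ q ^ 2 * 2 ^ n`.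

For that estimate, points in orbits of size at least four are chosen as long as there are any; each
divides `q` by at least four. When all orbits have at most three points, the group induced on `Ω`
has order `2 ^ r * 3 ^ s`, and `2 * r + s ≤ n` is needed (`index_of_small_orbits`). There is a
subgroup of index at most `2 ^ s` inducing an abelian group on `Ω`, so this follows from
`abelian_quotient_le`: a permutation group of degree `n` with an abelian quotient of order
`2 ^ a * 3 ^ b` satisfies `2 * a + 3 * b ≤ n`. A minimal supplement of the kernel of that quotient
is nilpotent, which reduces the claim to its Sylow subgroups for `2` and `3`, treated in
`pGroup_abelian_quotient_le`.
-/

open scoped commutatorElement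

/-! ### Bases of group actions -/

/-- The kernel of an action: the elements fixing every point. -/
def actKer (G Ω : Type*) [Group G] [MulAction G Ω] : Subgroup G :=
  (MulAction.toPermHom G Ω).ker

theorem mem_actKer {G Ω : Type*} [Group G] [MulAction G Ω] {g : G} :
    g ∈ actKer G Ω ↔ ∀ x : Ω, g • x = x := by
  simp [actKer, MonoidHom.mem_ker, Equiv.Perm.ext_iff]

instance actKer_normal {G Ω : Type*} [Group G] [MulAction G Ω] : (actKer G Ω).Normal := by
  unfold actKer; infer_instance

theorem actKer_subgroup {G Ω : Type*} [Group G] [MulAction G Ω] (H : Subgroup G) :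
    actKer H Ω = (actKer G Ω).subgroupOf H := by
  ext g
  simp only [mem_actKer, Subgroup.mem_subgroupOf, Subgroup.smul_def]

theorem actKer_subgroup_index {G Ω : Type*} [Group G] [MulAction G Ω] (H : Subgroup G) :
    (actKer H Ω).index = (actKer G Ω).relIndex H := by
  rw [actKer_subgroup]; rfl

/-- `G` has a base of size at most `c` on `Ω`, where a base is a set of points whose
pointwise stabiliser is the kernel of the action. -/
def HasBase (G Ω : Type*) [Group G] [MulAction G Ω] (c : ℕ) : Prop :=
  ∃ S : Finset Ω, S.card ≤ c ∧ ∀ g : G, (∀ s ∈ S, g • s = s) → g ∈ actKer G Ω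

theorem HasBase.mono {G Ω : Type*} [Group G] [MulAction G Ω] {c d : ℕ}
    (h : HasBase G Ω c) (hcd : c ≤ d) : HasBase G Ω d := by
  obtain ⟨S, h1, h2⟩ := h
  exact ⟨S, h1.trans hcd, h2⟩

theorem HasBase.of_trivial {G Ω : Type*} [Group G] [MulAction G Ω]
    (h : ∀ g : G, g ∈ actKer G Ω) : HasBase G Ω 0 :=
  ⟨∅, by simp, fun g _ => h g⟩

/-- Bases can be built in two steps: a base for a subgroup `H`, and a base for the
stabiliser of the first base, which meets `H` in the kernel only. -/
theorem HasBase.two_step {G Ω : Type*} [Group G] [MulAction G Ω] (H : Subgroup G) {c₁ c₂ : ℕ}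
    (h₁ : HasBase H Ω c₁)
    (h₂ : ∀ X : Subgroup G, X ⊓ H ≤ actKer G Ω → HasBase X Ω c₂) :
    HasBase G Ω (c₁ + c₂) := by
  classical
  obtain ⟨S₁, hc₁, hS₁⟩ := h₁
  obtain ⟨S₂, hc₂, hS₂⟩ := h₂ (fixingSubgroup G (S₁ : Set Ω)) (by
    rintro g ⟨hg1, hg2⟩
    have := hS₁ ⟨g, hg2⟩ (fun s hs => (mem_fixingSubgroup_iff G).1 hg1 s hs)
    exact mem_actKer.2 (fun x => mem_actKer.1 this x))
  refine ⟨S₁ ∪ S₂, (Finset.card_union_le _ _).trans (by omega), fun g hg => ?_⟩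
  have hgX : g ∈ fixingSubgroup G (S₁ : Set Ω) :=
    (mem_fixingSubgroup_iff G).2 (fun s hs => hg s (Finset.mem_union_left _ hs))
  have := hS₂ ⟨g, hgX⟩ (fun s hs => hg s (Finset.mem_union_right _ hs))
  exact mem_actKer.2 (fun x => mem_actKer.1 this x)

theorem HasBase.of_stabilizer {G Ω : Type*} [Group G] [MulAction G Ω] (ω : Ω) {c : ℕ}
    (h : HasBase (MulAction.stabilizer G ω) Ω c) : HasBase G Ω (c + 1) := by
  classical
  obtain ⟨S, hc, hS⟩ := h
  refine ⟨insert ω S, (Finset.card_insert_le _ _).trans (by omega), fun g hg => ?_⟩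
  have := hS ⟨g, hg ω (Finset.mem_insert_self _ _)⟩
    (fun s hs => hg s (Finset.mem_insert_of_mem hs))
  exact mem_actKer.2 (fun x => mem_actKer.1 this x)

theorem actKer_le_stabilizer {G Ω : Type*} [Group G] [MulAction G Ω] (ω : Ω) :
    actKer G Ω ≤ MulAction.stabilizer G ω := fun _ hg => mem_actKer.1 hg ω

theorem stabilizer_index_mul {G Ω : Type*} [Group G] [MulAction G Ω] (ω : Ω) :
    (actKer (MulAction.stabilizer G ω) Ω).index * (MulAction.stabilizer G ω).index
      = (actKer G Ω).index := by
  rw [actKer_subgroup_index]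
  exact Subgroup.relIndex_mul_index (actKer_le_stabilizer ω)

/-- Each point added to a base can be chosen to cut the group down properly. -/
theorem exists_base_cardFactors {Ω : Type*} (q : ℕ) : ∀ (G : Type*) [Group G] [Finite G]
    [MulAction G Ω], (actKer G Ω).index = q →
    ∃ c, HasBase G Ω c ∧ c ≤ ArithmeticFunction.cardFactors q := by
  induction q using Nat.strong_induction_on with
  | _ q ih =>
  intro G _ _ _ hq
  by_cases htriv : ∀ g : G, g ∈ actKer G Ω
  · exact ⟨0, HasBase.of_trivial htriv, by simp⟩
  · push Not at htriv
    obtain ⟨g, hg⟩ := htriv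
    rw [mem_actKer] at hg
    push Not at hg
    obtain ⟨ω, hω⟩ := hg
    have hmul := stabilizer_index_mul (G := G) ω
    have h1 : (MulAction.stabilizer G ω).index ≠ 1 := by
      rw [Ne, Subgroup.index_eq_one]
      intro h
      exact hω (show g ∈ MulAction.stabilizer G ω by rw [h]; trivial)
    have h0 : (MulAction.stabilizer G ω).index ≠ 0 := Subgroup.index_ne_zero_of_finite
    have h0' : (actKer (MulAction.stabilizer G ω) Ω).index ≠ 0 :=
      Subgroup.index_ne_zero_of_finite
    rw [hq] at hmul
    obtain ⟨c, hc, hcq⟩ := ih _ (by rw [← hmul]; nlinarith [Nat.pos_of_ne_zero h0', Nat.pos_of_ne_zero h0, show 2 ≤ (MulAction.stabilizer G ω).index by omega]) (MulAction.stabilizer G ω) rfl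
    refine ⟨c + 1, HasBase.of_stabilizer ω hc, ?_⟩
    rw [← hmul, ArithmeticFunction.cardFactors_mul h0' h0]
    have : 0 < ArithmeticFunction.cardFactors (MulAction.stabilizer G ω).index := by
      rw [Nat.pos_iff_ne_zero, Ne, ArithmeticFunction.cardFactors_eq_zero_iff_eq_zero_or_one]
      omega
    omega

theorem two_pow_cardFactors_le {q : ℕ} (hq : q ≠ 0) :
    2 ^ ArithmeticFunction.cardFactors q ≤ q := by
  rw [ArithmeticFunction.cardFactors_apply]
  conv_rhs => rw [← Nat.prod_primeFactorsList hq]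
  exact List.pow_card_le_prod _ _ (fun p hp => (Nat.prime_of_mem_primeFactorsList hp).two_le)

theorem exists_base_two_pow {G Ω : Type*} [Group G] [Finite G] [MulAction G Ω] :
    ∃ c, HasBase G Ω c ∧ 2 ^ c ≤ (actKer G Ω).index := by
  obtain ⟨c, h1, h2⟩ := exists_base_cardFactors (Ω := Ω) _ G rfl
  exact ⟨c, h1, (Nat.pow_le_pow_right (by norm_num) h2).trans
    (two_pow_cardFactors_le Subgroup.index_ne_zero_of_finite)⟩

/-! ### Abelian quotients of `p`-groups -/

/-- An invariant set, as a `G`-set of its own. -/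
def invSub {G α : Type*} [Group G] [MulAction G α] (A : Set α)
    (hA : ∀ g : G, ∀ a ∈ A, g • a ∈ A) : SubMulAction G α where
  carrier := A
  smul_mem' g _ ha := hA g _ ha

theorem mem_actKer_invSub {G α : Type*} [Group G] [MulAction G α] {A : Set α}
    {hA : ∀ g : G, ∀ a ∈ A, g • a ∈ A} {g : G} :
    g ∈ actKer G (invSub A hA) ↔ ∀ a ∈ A, g • a = a := by
  rw [mem_actKer]
  constructor
  · intro h a ha
    exact congrArg Subtype.val (h ⟨a, ha⟩)
  · rintro h ⟨a, ha⟩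
    exact Subtype.ext (h a ha)

theorem actKer_index_dvd {G α : Type*} [Group G] [Finite α] [MulAction G α] :
    (actKer G α).index ∣ (Nat.card α).factorial := by
  unfold actKer
  rw [Subgroup.index_ker, ← Nat.card_perm]
  exact Subgroup.card_subgroup_dvd_card _

theorem fixing_index_dvd {G α : Type*} [Group G] [MulAction G α] {A : Set α} (hfin : A.Finite)
    (hA : ∀ g : G, ∀ a ∈ A, g • a ∈ A) : (fixingSubgroup G A).index ∣ A.ncard.factorial := by
  have h : fixingSubgroup G A = actKer G (invSub A hA) := by
    ext g
    rw [mem_actKer_invSub, mem_fixingSubgroup_iff]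
  have : Finite (invSub A hA) := hfin
  rw [h]
  exact actKer_index_dvd

theorem smul_mem_orbit_iff' {G α : Type*} [Group G] [MulAction G α] (g : G) {a b : α} :
    g • a ∈ MulAction.orbit G b ↔ a ∈ MulAction.orbit G b := by
  refine ⟨fun h => ?_, MulAction.mem_orbit_of_mem_orbit g⟩
  simpa using MulAction.mem_orbit_of_mem_orbit g⁻¹ h

theorem relIndex_le_mul {G : Type*} [Group G] [Finite G] (N : Subgroup G) {H K : Subgroup G}
    (hHK : H ≤ K) : N.relIndex K ≤ N.relIndex H * H.relIndex K := by
  rw [← Subgroup.inf_relIndex_right N H, Subgroup.relIndex_mul_relIndex _ _ _ inf_le_right hHK]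
  exact Subgroup.relIndex_le_of_le_left inf_le_left Subgroup.index_ne_zero_of_finite

/-- Let the `p`-group `P` (`p = 2, 3`) act on the invariant set `F` of `k` points. If the group
induced on `F` has an abelian quotient `P ⧸ N` of order `p ^ s`, then `p * s ≤ k`. An intransitive
action is split into an orbit and the rest. For a transitive one, take a subgroup `M` of index `p`
above a point stabiliser and two of its `p` orbits: modulo commutators, the subgroups of `M` fixing
one or the other orbit pointwise are the same, which leaves the subgroup fixing both orbits, to
which induction applies, and one factor bounded by the `p`-part of the factorial of `k / p`. -/
theorem pGroup_abelian_quotient_le {p : ℕ} [Fact p.Prime] (hp : p = 2 ∨ p = 3) {β : Type*}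
    (k : ℕ) : ∀ (P : Type*) [Group P] [Finite P] [MulAction P β] (_ : IsPGroup p P)
    (F : Finset β) (_ : ∀ g : P, ∀ b ∈ F, g • b ∈ F) (_ : F.card = k) (N : Subgroup P)
    (_ : ∀ g h : P, ⁅g, h⁆ ∈ N) (_ : ∀ g : P, (∀ b ∈ F, g • b = b) → g ∈ N) (s : ℕ)
    (_ : N.index = p ^ s), p * s ≤ k := by
  classical
  have hp1 : 1 < p := by omega
  induction k using Nat.strong_induction_on with
  | _ k ih =>
  intro P _ _ _ hP F hF hk N hcomm hfix s hs
  have hN : N.Normal := Subgroup.Normal.of_commutator_le P (by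
    rw [commutator_def, Subgroup.commutator_le]
    exact fun g _ h _ => hcomm g h)
  by_cases htr : ∀ b ∈ F, ∀ c ∈ F, c ∈ MulAction.orbit P b
  swap
  · push Not at htr
    obtain ⟨b, hb, c, hc, hbc⟩ := htr
    set Δ := F.filter (· ∈ MulAction.orbit P b) with hΔ
    set H := fixingSubgroup P (Δ : Set β) with hH
    have hbΔ : b ∈ Δ := by simp [hΔ, hb]
    have hcΔ : c ∉ Δ := by simp [hΔ, hbc]
    have hΔF : Δ ⊆ F := Finset.filter_subset _ _
    have hcard : (F \ Δ).card + Δ.card = F.card := Finset.card_sdiff_add_card_eq_card hΔF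
    have hpos1 : 0 < Δ.card := Finset.card_pos.2 ⟨b, hbΔ⟩
    have hpos2 : 0 < (F \ Δ).card := Finset.card_pos.2 ⟨c, by simp [hc, hcΔ]⟩
    have hinv : ∀ (g : P) x, g • x ∈ MulAction.orbit P b ↔ x ∈ MulAction.orbit P b := by
      intro g x
      exact smul_mem_orbit_iff' g
    obtain ⟨s₁, hs₁⟩ := hP.index (H ⊔ N)
    obtain ⟨s₂, hs₂⟩ := (hP.to_subgroup H).index (N.subgroupOf H)
    have h1 := ih Δ.card (by omega) P hP Δ (by
      intro g x hx
      simp only [hΔ, Finset.mem_filter] at hx ⊢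
      exact ⟨hF g x hx.1, (hinv g x).2 hx.2⟩) rfl (H ⊔ N)
      (fun g h => (le_sup_right : N ≤ H ⊔ N) (hcomm g h))
      (fun g hg => (le_sup_left : H ≤ H ⊔ N) ((mem_fixingSubgroup_iff P).2 hg)) s₁ hs₁
    have h2 := ih (F \ Δ).card (by omega) H (hP.to_subgroup H) (F \ Δ) (by
      intro g x hx
      simp only [hΔ, Finset.mem_sdiff, Finset.mem_filter, not_and] at hx ⊢
      refine ⟨hF g x hx.1, fun _ h => hx.2 hx.1 ((hinv (g : P) x).1 h)⟩) rfl (N.subgroupOf H)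
      (fun g h => Subgroup.mem_subgroupOf.2 (hcomm g h))
      (fun g hg => Subgroup.mem_subgroupOf.2 (hfix g (fun x hx => by
        by_cases hxΔ : x ∈ Δ
        · exact (mem_fixingSubgroup_iff P).1 g.2 x hxΔ
        · exact hg x (Finset.mem_sdiff.2 ⟨hx, hxΔ⟩)))) s₂ hs₂
    have h3 : p ^ (s₂ + s₁) = p ^ s := by
      rw [← hs, pow_add, ← hs₁, ← hs₂, ← Subgroup.relIndex_mul_index (le_sup_right : N ≤ H ⊔ N),
        Subgroup.relIndex_sup_right]
      rfl
    have h4 := Nat.pow_right_injective hp1 h3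
    rw [← h4, mul_add]
    omega
  by_cases hk1 : F.card ≤ 1
  · have : N = ⊤ := by
      rw [eq_top_iff]
      intro g _
      exact hfix g (fun b hb => Finset.card_le_one.1 hk1 _ (hF g b hb) _ hb)
    rw [this, Subgroup.index_top] at hs
    have : s = 0 := by
      by_contra h
      have := Nat.one_lt_pow h hp1
      omega
    simp [this]
  obtain ⟨b, hb⟩ := Finset.card_pos.1 (by omega : 0 < F.card)
  have horb : (MulAction.orbit P b) = (F : Set β) := by
    ext x
    constructor
    · rintro ⟨g, rfl⟩
      exact hF g b hb
    · exact htr b hb x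
  have hstab : (MulAction.stabilizer P b).index = k := by
    rw [MulAction.index_stabilizer, horb, Set.ncard_coe_finset, hk]
  -- a subgroup of index `p` above the point stabiliser
  obtain ⟨M, hMi, hstM⟩ : ∃ M : Subgroup P, M.index = p ∧ MulAction.stabilizer P b ≤ M := by
    obtain ⟨a, ha⟩ := IsPGroup.iff_card.1 hP
    obtain ⟨c, hc⟩ := IsPGroup.iff_card.1 (hP.to_subgroup (MulAction.stabilizer P b))
    have hm := (MulAction.stabilizer P b).card_mul_index
    rw [hstab, ha, hc] at hm
    have hca : c < a := by
      by_contra hca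
      have := Nat.pow_le_pow_right (by omega : 0 < p) (not_lt.1 hca)
      have : 0 < p ^ c := by positivity
      nlinarith
    obtain ⟨K, hK, hle⟩ := Sylow.exists_subgroup_card_pow_prime_le p (m := a - 1)
      (by rw [ha]; exact pow_dvd_pow _ (by omega)) _ hc (by omega)
    refine ⟨K, ?_, hle⟩
    have hm' := K.card_mul_index
    rw [hK, ha, show p ^ a = p ^ (a - 1) * p by rw [← pow_succ]; congr 1; omega] at hm'
    exact Nat.eq_of_mul_eq_mul_left (by positivity) hm'
  have hMn : M.Normal := by
    apply Subgroup.normal_of_index_eq_minFac_card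
    obtain ⟨a, ha⟩ := IsPGroup.iff_card.1 hP
    have ha0 : a ≠ 0 := by
      rintro rfl
      have := M.index_dvd_card
      rw [ha, hMi, pow_zero, Nat.dvd_one] at this
      omega
    rw [hMi, ha, Nat.pow_minFac ha0, (Fact.out : p.Prime).minFac_eq]
  set B₁ := F.filter (· ∈ MulAction.orbit M b) with hB₁
  set m := B₁.card with hm
  have hB₁o : (B₁ : Set β) = MulAction.orbit M b := by
    ext x
    simp only [hB₁, Finset.coe_filter, Set.mem_ofPred_eq, and_iff_right_iff_imp]
    rintro ⟨g, rfl⟩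
    exact hF g b hb
  have hmk : m * p = k := by
    have : MulAction.stabilizer M b = (MulAction.stabilizer P b).subgroupOf M := by
      ext g; rfl
    have h1 : (MulAction.stabilizer P b).relIndex M = m := by
      rw [Subgroup.relIndex, ← this, MulAction.index_stabilizer, ← hB₁o, Set.ncard_coe_finset]
    rw [← h1, ← hMi, Subgroup.relIndex_mul_index hstM, hstab]
  have hbB : b ∈ B₁ := by simp [hB₁, hb]
  have hmpos : 0 < m := Finset.card_pos.2 ⟨b, hbB⟩
  obtain ⟨x, hx⟩ : ∃ x, x ∉ M := by
    by_contra h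
    push Not at h
    rw [(Subgroup.eq_top_iff' M).2 h, Subgroup.index_top] at hMi
    omega
  set B₂ := B₁.image (x • ·) with hB₂
  have hB₂c : B₂.card = m := Finset.card_image_of_injective _ (MulAction.injective x)
  have hB₁F : B₁ ⊆ F := Finset.filter_subset _ _
  have hB₂F : B₂ ⊆ F := by
    intro y hy
    obtain ⟨z, hz, rfl⟩ := Finset.mem_image.1 hy
    exact hF x z (hB₁F hz)
  have hdisj : Disjoint B₁ B₂ := by
    rw [Finset.disjoint_left]
    intro y hy1 hy2
    obtain ⟨z, hz, rfl⟩ := Finset.mem_image.1 hy2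
    rw [← Finset.mem_coe, hB₁o] at hy1 hz
    obtain ⟨g, hg⟩ := hy1
    obtain ⟨h, rfl⟩ := hz
    have h1 : (g : P)⁻¹ * x * h ∈ MulAction.stabilizer P b := by
      rw [MulAction.mem_stabilizer_iff, mul_smul, mul_smul, inv_smul_eq_iff]
      exact hg.symm
    have h2 := M.mul_mem (M.mul_mem g.2 (hstM h1)) (M.inv_mem h.2)
    apply hx
    convert h2 using 1
    group
  have hMB₁ : ∀ g ∈ M, ∀ y ∈ B₁, g • y ∈ B₁ := by
    intro g hg y hy
    rw [← Finset.mem_coe, hB₁o] at hy ⊢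
    exact MulAction.mem_orbit_of_mem_orbit (⟨g, hg⟩ : M) hy
  have hMB₂ : ∀ g ∈ M, ∀ y ∈ B₂, g • y ∈ B₂ := by
    intro g hg y hy
    obtain ⟨z, hz, rfl⟩ := Finset.mem_image.1 hy
    refine Finset.mem_image.2 ⟨(x⁻¹ * g * x) • z, hMB₁ _ ?_ z hz, ?_⟩
    · simpa using hMn.conj_mem g hg x⁻¹
    · simp [mul_smul]
  set M₁ := M ⊓ fixingSubgroup P (B₁ : Set β) with hM₁
  set M₂ := M ⊓ fixingSubgroup P (B₂ : Set β) with hM₂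
  have hconj : M₁ ≤ M₂ ⊔ N := by
    rintro g ⟨hg1, hg2⟩
    have h1 : x * g * x⁻¹ ∈ M₂ := by
      refine ⟨hMn.conj_mem g hg1 x, (mem_fixingSubgroup_iff P).2 ?_⟩
      intro y hy
      obtain ⟨z, hz, rfl⟩ := Finset.mem_image.1 hy
      have := (mem_fixingSubgroup_iff P).1 hg2 z hz
      simp [mul_smul, this]
    have h2 : g = ⁅g, x⁆ * (x * g * x⁻¹) := by
      rw [commutatorElement_def]; group
    rw [h2]
    exact mul_mem ((le_sup_right : N ≤ M₂ ⊔ N) (hcomm g x)) ((le_sup_left : M₂ ≤ M₂ ⊔ N) h1)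
  set L := M₁ ⊔ M₂ with hL
  set M₁₂ := M₁ ⊓ M₂ with hM₁₂
  have hLM : L ≤ M := sup_le inf_le_left inf_le_left
  have hNL : N.relIndex L = N.relIndex M₂ := by
    rw [← Subgroup.relIndex_sup_right L N, ← Subgroup.relIndex_sup_right M₂ N]
    congr 1
    apply le_antisymm
    · exact sup_le (sup_le hconj le_sup_left) le_sup_right
    · exact sup_le_sup_right le_sup_right N
  have hkey : N.index ≤ N.relIndex M₁₂ * M₁.relIndex M * p := by
    have e1 : N.index ≤ N.relIndex M * p := by
      have := relIndex_le_mul N (le_top : M ≤ ⊤)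
      rwa [Subgroup.relIndex_top_right, Subgroup.relIndex_top_right, hMi] at this
    have e2 := relIndex_le_mul N hLM
    have e3 := relIndex_le_mul N (inf_le_right : M₁₂ ≤ M₂)
    have e4 : M₁₂.relIndex M₂ ≤ M₁.relIndex L := by
      rw [Subgroup.inf_relIndex_right]
      exact Subgroup.relIndex_le_of_le_right le_sup_right Subgroup.index_ne_zero_of_finite
    have e5 := Subgroup.relIndex_mul_relIndex M₁ L M le_sup_left hLM
    calc N.index ≤ N.relIndex M * p := e1
      _ ≤ (N.relIndex L * L.relIndex M) * p := by gcongr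
      _ = (N.relIndex M₂ * L.relIndex M) * p := by rw [hNL]
      _ ≤ ((N.relIndex M₁₂ * M₁.relIndex L) * L.relIndex M) * p := by
          gcongr
          exact e3.trans (by gcongr)
      _ = _ := by rw [← e5]; ring
  obtain ⟨e, he⟩ := (hP.to_subgroup M).index (M₁.subgroupOf M)
  obtain ⟨v, hv⟩ := (hP.to_subgroup M₁₂).index (N.subgroupOf M₁₂)
  have hedvd : p ^ e ∣ m.factorial := by
    rw [← he]
    have h1 : M₁.subgroupOf M = fixingSubgroup M (B₁ : Set β) := by
      ext g
      simp only [hM₁, Subgroup.mem_subgroupOf, Subgroup.mem_inf, mem_fixingSubgroup_iff,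
        SetLike.coe_mem, true_and]
      rfl
    rw [h1, hm, ← Set.ncard_coe_finset]
    exact fixing_index_dvd (Finset.finite_toSet _) (fun g a ha => hMB₁ g g.2 a ha)
  have hem : (p - 1) * e < m := by
    have h1 := (padicValNat_dvd_iff_le (Nat.factorial_ne_zero m)).1 hedvd
    exact (Nat.mul_le_mul_left _ h1).trans_lt
      (sub_one_mul_padicValNat_factorial_lt_of_ne_zero p (by omega))
  have hsub : B₁ ∪ B₂ ⊆ F := Finset.union_subset hB₁F hB₂F
  have hrest : (F \ (B₁ ∪ B₂)).card + 2 * m = k := by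
    rw [← hk, ← Finset.card_sdiff_add_card_eq_card hsub, Finset.card_union_of_disjoint hdisj,
      hB₂c, two_mul]
  have hinv' : ∀ (B : Finset β), (∀ g ∈ M, ∀ y ∈ B, g • y ∈ B) → ∀ g ∈ M, ∀ y, g • y ∈ B → y ∈ B := by
    intro B hB g hg y hy
    simpa using hB g⁻¹ (M.inv_mem hg) _ hy
  have hvb := ih _ (by omega : (F \ (B₁ ∪ B₂)).card < k) M₁₂ (hP.to_subgroup M₁₂) (F \ (B₁ ∪ B₂)) (by
      intro g y hy
      have hgM : (g : P) ∈ M := g.2.1.1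
      simp only [Finset.mem_sdiff, Finset.mem_union, not_or] at hy ⊢
      exact ⟨hF g y hy.1, fun h => hy.2.1 (hinv' B₁ hMB₁ g hgM y h),
        fun h => hy.2.2 (hinv' B₂ hMB₂ g hgM y h)⟩) rfl (N.subgroupOf M₁₂)
      (fun g h => Subgroup.mem_subgroupOf.2 (hcomm g h))
      (fun g hg => Subgroup.mem_subgroupOf.2 (hfix g (fun y hy => by
        by_cases h1 : y ∈ B₁
        · exact (mem_fixingSubgroup_iff P).1 g.2.1.2 y h1
        by_cases h2 : y ∈ B₂
        · exact (mem_fixingSubgroup_iff P).1 g.2.2.2 y h2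
        exact hg y (by simp [hy, h1, h2])))) v hv
  have hsle : s ≤ v + e + 1 := by
    have : p ^ s ≤ p ^ (v + e + 1) := by
      rw [← hs, pow_succ, pow_add, ← hv, ← he]
      exact hkey
    exact (Nat.pow_le_pow_iff_right hp1).1 this
  rcases hp with rfl | rfl <;> omega

/-! ### Abelian quotients of permutation groups -/

open scoped Pointwise in
/-- Let `P`, `T` be commuting subgroups of coprime orders, `P` a `p`-group with `p = 2, 3`. Apply
`pGroup_abelian_quotient_le` to the action of `P` on the set of `T`-orbits of points moved by `P`:
by coprimality, an element of `P` fixing each of these orbits fixes every point. Those of the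
orbits that are not singletons have at least two points, which gives the weights `2` and `1`. -/
theorem commuting_pGroup_le {p : ℕ} [Fact p.Prime] (hp : p = 2 ∨ p = 3)
    {D α : Type*} [Group D] [Finite D] [Fintype α] [MulAction D α] (P T : Subgroup D)
    (hP : IsPGroup p P) (hcop : (Nat.card P).Coprime (Nat.card T))
    (hPT : ∀ x ∈ P, ∀ t ∈ T, x * t = t * x) (N : Subgroup D)
    (hcomm : ∀ g h : D, ⁅g, h⁆ ∈ N) (hker : actKer D α ≤ N) (b : ℕ)
    (hb : p ^ b ∣ N.relIndex P) :
    2 * (p * b) ≤ 2 * Nat.card {a : α // (∀ t ∈ T, t • a = a) ∧ ¬ ∀ x ∈ P, x • a = a}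
      + Nat.card {a : α // (¬ ∀ t ∈ T, t • a = a) ∧ ¬ ∀ x ∈ P, x • a = a} := by
  classical
  have hp1 : 1 < p := by omega
  set A : Finset α := Finset.univ.filter (fun a => ¬ ∀ x ∈ P, x • a = a) with hA
  set A₁ : Finset α := Finset.univ.filter
    (fun a => (∀ t ∈ T, t • a = a) ∧ ¬ ∀ x ∈ P, x • a = a) with hA₁
  set A₂ : Finset α := Finset.univ.filter
    (fun a => (¬ ∀ t ∈ T, t • a = a) ∧ ¬ ∀ x ∈ P, x • a = a) with hA₂
  set F : Finset (Set α) := A.image (fun a => MulAction.orbit T a) with hF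
  have hc1 : Nat.card {a : α // (∀ t ∈ T, t • a = a) ∧ ¬ ∀ x ∈ P, x • a = a} = A₁.card := by
    rw [Nat.card_eq_fintype_card, Fintype.card_subtype]
  have hc2 : Nat.card {a : α // (¬ ∀ t ∈ T, t • a = a) ∧ ¬ ∀ x ∈ P, x • a = a} = A₂.card := by
    rw [Nat.card_eq_fintype_card, Fintype.card_subtype]
  rw [hc1, hc2]
  have hAmem : ∀ g : D, (∀ x ∈ P, x * g = g * x) → ∀ a : α, (¬ ∀ x ∈ P, x • a = a) →
      ¬ ∀ x ∈ P, x • (g • a) = g • a := by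
    intro g hg a ha h
    refine ha (fun x hx => ?_)
    have := h x hx
    rw [← mul_smul, hg x hx, mul_smul] at this
    exact MulAction.injective g this
  have hAP : ∀ g ∈ P, ∀ a : α, (¬ ∀ x ∈ P, x • a = a) → ¬ ∀ x ∈ P, x • (g • a) = g • a := by
    intro g hg a ha h
    refine ha (fun x hx => ?_)
    have := h (g * x * g⁻¹) (P.mul_mem (P.mul_mem hg hx) (P.inv_mem hg))
    rw [← mul_smul, inv_mul_cancel_right, mul_smul] at this
    exact MulAction.injective g this
  have horb : ∀ g ∈ P, ∀ a : α, g • MulAction.orbit T a = MulAction.orbit T (g • a) := by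
    intro g hg a
    ext y
    rw [Set.mem_smul_set]
    constructor
    · rintro ⟨_, ⟨t, rfl⟩, rfl⟩
      refine ⟨t, ?_⟩
      change (t : D) • g • a = g • (t : D) • a
      rw [← mul_smul, ← mul_smul, hPT g hg t t.2]
    · rintro ⟨t, rfl⟩
      refine ⟨t • a, ⟨t, rfl⟩, ?_⟩
      change g • (t : D) • a = (t : D) • g • a
      rw [← mul_smul, ← mul_smul, hPT g hg t t.2]
  obtain ⟨s, hs⟩ := hP.index (N.subgroupOf P)
  have hbs : b ≤ s := by
    have : p ^ b ∣ p ^ s := by rw [← hs]; exact hb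
    exact (Nat.pow_dvd_pow_iff_le_right hp1).1 this
  have hmain : p * s ≤ F.card := by
    refine pGroup_abelian_quotient_le (β := Set α) hp F.card P hP F ?_ rfl (N.subgroupOf P)
      (fun g h => Subgroup.mem_subgroupOf.2 (hcomm g h)) ?_ s hs
    · rintro g B hB
      obtain ⟨a, ha, rfl⟩ := Finset.mem_image.1 hB
      refine Finset.mem_image.2 ⟨g • a, ?_, (horb g g.2 a).symm⟩
      simp only [hA, Finset.mem_filter, Finset.mem_univ, true_and] at ha ⊢
      exact hAP g g.2 a ha
    · rintro ⟨x, hx⟩ h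
      refine Subgroup.mem_subgroupOf.2 (hker (mem_actKer.2 fun a => ?_))
      by_cases ha : ∀ x ∈ P, x • a = a
      · exact ha x hx
      have h1 : x • MulAction.orbit T a = MulAction.orbit T a :=
        h _ (Finset.mem_image.2 ⟨a, by simpa [hA] using ha, rfl⟩)
      rw [horb x hx] at h1
      obtain ⟨⟨t, ht⟩, hta⟩ : x • a ∈ MulAction.orbit T a := by
        rw [← h1]; exact MulAction.mem_orbit_self _
      replace hta : t • a = x • a := hta
      have hpow : ∀ n : ℕ, x ^ n • a = t ^ n • a := by
        intro n
        induction n with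
        | zero => simp
        | succ n ihn =>
          have hc : Commute x t := hPT x hx t ht
          rw [pow_succ, mul_smul, ← hta, ← mul_smul, (hc.pow_left n).eq, mul_smul, ihn,
            ← mul_smul, ← pow_succ']
      have e1 : x ^ Nat.card T • a = a := by
        rw [hpow, show t ^ Nat.card T = 1 from
          congrArg Subtype.val (pow_card_eq_one' (x := (⟨t, ht⟩ : T))), one_smul]
      have e2 : x ^ Nat.card P • a = a := by
        rw [show x ^ Nat.card P = 1 from
          congrArg Subtype.val (pow_card_eq_one' (x := (⟨x, hx⟩ : P))), one_smul]
      rw [MulAction.pow_smul_eq_iff_period_dvd] at e1 e2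
      have := Nat.dvd_gcd e2 e1
      rw [Nat.Coprime] at hcop
      rw [hcop, ← MulAction.pow_smul_eq_iff_period_dvd, pow_one] at this
      exact this
  have hsplit : A = A₁ ∪ A₂ := by
    ext a
    simp only [hA, hA₁, hA₂, Finset.mem_filter, Finset.mem_union, Finset.mem_univ, true_and]
    tauto
  have hFc : F.card ≤ A₁.card + (A₂.image (fun a => MulAction.orbit T a)).card := by
    rw [hF, hsplit, Finset.image_union]
    exact (Finset.card_union_le _ _).trans (by gcongr; exact Finset.card_image_le)
  have h2 : 2 * (A₂.image (fun a => MulAction.orbit T a)).card ≤ A₂.card := by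
    apply Finset.mul_card_image_le_card
    intro B hB
    obtain ⟨a, ha, rfl⟩ := Finset.mem_image.1 hB
    have ha' := ha
    simp only [hA₂, Finset.mem_filter, Finset.mem_univ, true_and] at ha
    obtain ⟨t, ht, hta⟩ : ∃ t ∈ T, t • a ≠ a := by
      have := ha.1
      push Not at this
      exact this
    refine Finset.one_lt_card.2 ⟨a, by simp [ha'], t • a, ?_, hta.symm⟩
    simp only [hA₂, Finset.mem_filter, Finset.mem_univ, true_and]
    refine ⟨⟨fun h => ?_, hAmem t (fun x hx => hPT x hx t ht) a ha.2⟩, ?_⟩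
    · have := h t⁻¹ (T.inv_mem ht)
      rw [inv_smul_smul] at this
      exact hta this.symm
    · exact MulAction.orbit_eq_iff.2 ⟨⟨t, ht⟩, rfl⟩
  have h3 : p * b ≤ p * s := Nat.mul_le_mul_left _ hbs
  omega

/-- The nilpotent case of `abelian_quotient_le`. A point moved by both the Sylow `2`-subgroup and the
Sylow `3`-subgroup has weight one half in the estimate for each of them. -/
theorem nilpotent_abelian_quotient_le {D α : Type*} [Group D] [Finite D] [Fintype α]
    [MulAction D α] (hnil : Group.IsNilpotent D) (N : Subgroup D)
    (hcomm : ∀ g h : D, ⁅g, h⁆ ∈ N) (hker : actKer D α ≤ N) (a b : ℕ)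
    (hidx : N.index = 2 ^ a * 3 ^ b) : 2 * a + 3 * b ≤ Nat.card α := by
  classical
  have hN : N.Normal := Subgroup.Normal.of_commutator_le D (by
    rw [commutator_def, Subgroup.commutator_le]
    exact fun g _ h _ => hcomm g h)
  have hsyl : ∀ (p : ℕ) (_ : Fact p.Prime) (P : Sylow p D), P.Normal :=
    ((Group.isNilpotent_of_finite_tfae (G := D)).out 0 3).1 hnil
  have : Fact (Nat.Prime 2) := ⟨Nat.prime_two⟩
  have : Fact (Nat.Prime 3) := ⟨Nat.prime_three⟩
  obtain ⟨P⟩ : Nonempty (Sylow 3 D) := inferInstance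
  obtain ⟨T⟩ : Nonempty (Sylow 2 D) := inferInstance
  have hPn := hsyl 3 inferInstance P
  have hTn := hsyl 2 inferInstance T
  have hcop : (Nat.card P).Coprime (Nat.card T) := by
    obtain ⟨n, hn⟩ := IsPGroup.iff_card.1 P.isPGroup'
    obtain ⟨m, hm⟩ := IsPGroup.iff_card.1 T.isPGroup'
    rw [hn, hm]
    exact Nat.Coprime.pow _ _ (by norm_num)
  have hdisj : Disjoint (P : Subgroup D) (T : Subgroup D) :=
    Subgroup.disjoint_of_coprime_natCard hcop
  have hPT : ∀ x ∈ (P : Subgroup D), ∀ t ∈ (T : Subgroup D), x * t = t * x := fun x hx t ht =>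
    Subgroup.commute_of_normal_of_disjoint _ _ hPn hTn hdisj x t hx ht
  have hdvd : ∀ (p : ℕ) [Fact p.Prime] (Q : Sylow p D) (c : ℕ), p ^ c ∣ N.index →
      p ^ c ∣ N.relIndex Q := by
    intro p hp Q c hc
    have h1 := Subgroup.relIndex_mul_index (le_sup_right : N ≤ (Q : Subgroup D) ⊔ N)
    rw [Subgroup.relIndex_sup_right] at h1
    have h2 : ((Q : Subgroup D) ⊔ N).index ∣ (Q : Subgroup D).index :=
      Subgroup.index_dvd_of_le le_sup_left
    have h3 : ¬ p ∣ (Q : Subgroup D).index := Q.not_dvd_index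
    have h4 : ¬ p ∣ ((Q : Subgroup D) ⊔ N).index := fun h => h3 (h.trans h2)
    rw [← h1] at hc
    exact (Nat.Coprime.pow_left c ((Nat.Prime.coprime_iff_not_dvd hp.out).2 h4)).dvd_of_dvd_mul_right hc
  have hb := commuting_pGroup_le (Or.inr rfl) (P : Subgroup D) (T : Subgroup D) P.isPGroup' hcop hPT
    N hcomm hker b (hdvd 3 P b (by rw [hidx]; exact dvd_mul_left _ _))
  have ha := commuting_pGroup_le (Or.inl rfl) (T : Subgroup D) (P : Subgroup D) T.isPGroup'
    hcop.symm (fun x hx t ht => (hPT t ht x hx).symm)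
    N hcomm hker a (hdvd 2 T a (by rw [hidx]; exact dvd_mul_right _ _))
  simp only [Nat.card_eq_fintype_card, Fintype.card_subtype] at ha hb ⊢
  set p : α → Prop := fun a => ∀ x ∈ (P : Subgroup D), x • a = a
  set q : α → Prop := fun a => ∀ x ∈ (T : Subgroup D), x • a = a
  change 2 * (3 * b) ≤ 2 * (Finset.univ.filter (fun a => q a ∧ ¬ p a)).card +
    (Finset.univ.filter (fun a => ¬ q a ∧ ¬ p a)).card at hb
  change 2 * (2 * a) ≤ 2 * (Finset.univ.filter (fun a => p a ∧ ¬ q a)).card +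
    (Finset.univ.filter (fun a => ¬ p a ∧ ¬ q a)).card at ha
  have e1 : (Finset.univ.filter (fun a => p a)).card + (Finset.univ.filter (fun a => ¬ p a)).card
      = Fintype.card α := Finset.card_filter_add_card_filter_not _
  have e2 : ((Finset.univ.filter (fun a => ¬ p a)).filter (fun a => q a)).card +
      ((Finset.univ.filter (fun a => ¬ p a)).filter (fun a => ¬ q a)).card
      = (Finset.univ.filter (fun a => ¬ p a)).card := Finset.card_filter_add_card_filter_not _
  have e3 : ((Finset.univ.filter (fun a => p a)).filter (fun a => q a)).card +
      ((Finset.univ.filter (fun a => p a)).filter (fun a => ¬ q a)).card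
      = (Finset.univ.filter (fun a => p a)).card := Finset.card_filter_add_card_filter_not _
  simp only [Finset.filter_filter] at e2 e3
  have e4 : (Finset.univ.filter (fun a => q a ∧ ¬ p a)) = Finset.univ.filter (fun a => ¬ p a ∧ q a) := by
    simp only [and_comm]
  have e5 : (Finset.univ.filter (fun a => ¬ q a ∧ ¬ p a)) = Finset.univ.filter (fun a => ¬ p a ∧ ¬ q a) := by
    simp only [and_comm]
  rw [e4, e5] at hb
  omega

/-- If a permutation group on `α` has an abelian quotient of order `2 ^ a * 3 ^ b`, then
`2 * a + 3 * b ≤ |α|`. Let `Y` be minimal with `Y ⊔ N = ⊤`. Then `N ⊓ Y`, which contains all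
commutators of `Y`, lies in every maximal subgroup of `Y`; so these are normal and `Y` is
nilpotent. -/
theorem abelian_quotient_le {D α : Type*} [Group D] [Finite D] [Fintype α]
    [MulAction D α] (N : Subgroup D)
    (hcomm : ∀ g h : D, ⁅g, h⁆ ∈ N) (hker : actKer D α ≤ N) (a b : ℕ)
    (hidx : N.index = 2 ^ a * 3 ^ b) : 2 * a + 3 * b ≤ Nat.card α := by
  classical
  have hN : N.Normal := Subgroup.Normal.of_commutator_le D (by
    rw [commutator_def, Subgroup.commutator_le]
    exact fun g _ h _ => hcomm g h)
  obtain ⟨Y, hY⟩ := (Set.toFinite {Y : Subgroup D | Y ⊔ N = ⊤}).exists_minimal ⟨⊤, by simp⟩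
  have hYN : Y ⊔ N = ⊤ := hY.1
  have hnil : Group.IsNilpotent Y := by
    refine ((Group.isNilpotent_of_finite_tfae (G := Y)).out 0 2).2 ?_
    intro H hH
    have hle : N.subgroupOf Y ≤ H := by
      by_contra hnle
      have h1 : H ⊔ N.subgroupOf Y = ⊤ := hH.2 _ (by
        refine lt_of_le_of_ne le_sup_left fun h => hnle ?_
        rw [h]; exact le_sup_right)
      have h2 : Y ≤ H.map Y.subtype ⊔ N := by
        have := congrArg (Subgroup.map Y.subtype) h1
        rw [Subgroup.map_sup, ← MonoidHom.range_eq_map, Subgroup.range_subtype] at this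
        conv_lhs => rw [← this]
        refine sup_le_sup_left ?_ _
        rw [Subgroup.subgroupOf_map_subtype]
        exact inf_le_left
      have h3 : H.map Y.subtype ⊔ N = ⊤ := by
        rw [eq_top_iff, ← hYN]
        exact sup_le h2 le_sup_right
      have h4 := hY.2 h3 (Subgroup.map_subtype_le H)
      refine hH.1 (eq_top_iff.2 fun y _ => ?_)
      obtain ⟨z, hz, hzy⟩ := h4 y.2
      have : z = y := Subtype.ext hzy
      rwa [← this]
    apply Subgroup.Normal.of_commutator_le
    rw [commutator_def, Subgroup.commutator_le]
    exact fun g _ h _ => hle (Subgroup.mem_subgroupOf.2 (hcomm g h))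
  refine nilpotent_abelian_quotient_le (D := Y) hnil (N.subgroupOf Y)
    (fun g h => Subgroup.mem_subgroupOf.2 (hcomm g h)) ?_ a b ?_
  · rw [actKer_subgroup]
    exact Subgroup.comap_mono hker
  · rw [← hidx]
    change N.relIndex Y = _
    rw [← Subgroup.relIndex_sup_right Y N, hYN, Subgroup.relIndex_top_right]

/-! ### Actions with small orbits -/

theorem index_eq_pow_of_pow_mem {G : Type*} [Group G] [Finite G] (N : Subgroup G) [N.Normal]
    (p : ℕ) [Fact p.Prime] (h : ∀ g : G, g ^ p ∈ N) : ∃ s, N.index = p ^ s := by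
  have : IsPGroup p (G ⧸ N) := by
    intro x
    induction x using QuotientGroup.induction_on with
    | H g =>
      refine ⟨1, ?_⟩
      rw [pow_one, ← QuotientGroup.mk_pow, QuotientGroup.eq_one_iff]
      exact h g
  exact IsPGroup.iff_card.1 this

theorem even_perm_commute {X : Type*} [Fintype X] [DecidableEq X] (hX : Fintype.card X ≤ 3)
    {σ τ : Equiv.Perm X} (hσ : Equiv.Perm.sign σ = 1) (hτ : Equiv.Perm.sign τ = 1) :
    σ * τ = τ * σ := by
  have := alternatingGroup.isMulCommutative_of_card_le_three (α := X)
    (by rw [Nat.card_eq_fintype_card]; exact hX)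
  have := this.is_comm.comm (⟨σ, hσ⟩ : alternatingGroup X) ⟨τ, hτ⟩
  exact congrArg Subtype.val this

theorem even_perm_cube {X : Type*} [Fintype X] [DecidableEq X] (hX : Fintype.card X ≤ 3)
    {σ : Equiv.Perm X} (hσ : Equiv.Perm.sign σ = 1) : σ ^ 3 = 1 := by
  rcases subsingleton_or_nontrivial X with h | h
  · exact Subsingleton.elim _ _
  · have h1 := two_mul_card_alternatingGroup (α := X)
    have h2 : Fintype.card (alternatingGroup X) ∣ 3 := by
      rw [Fintype.card_perm] at h1
      have h3 := Fintype.one_lt_card (α := X)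
      generalize Fintype.card X = n at *
      generalize Fintype.card (alternatingGroup X) = m at *
      interval_cases n
      · have : m = 1 := by simp [Nat.factorial] at h1; omega
        simp [this]
      · have : m = 3 := by simp [Nat.factorial] at h1; omega
        simp [this]
    have h4 : (⟨σ, hσ⟩ : alternatingGroup X) ^ 3 = 1 := by
      obtain ⟨k, hk⟩ := h2
      rw [hk, pow_mul, pow_card_eq_one, one_pow]
    exact congrArg Subtype.val h4

open Classical in
/-- The sign of the permutation induced on the orbit of `x`. -/
noncomputable def orbitSign {G Ω : Type*} [Group G] [Fintype Ω] [MulAction G Ω] (x : Ω) :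
    G →* ℤˣ :=
  Equiv.Perm.sign.comp (MulAction.toPermHom G (MulAction.orbit G x))

theorem smul_eq_of_toPermHom_orbit {G Ω : Type*} [Group G] [MulAction G Ω] {x : Ω}
    {g h : G} (hgh : MulAction.toPermHom G (MulAction.orbit G x) g =
      MulAction.toPermHom G (MulAction.orbit G x) h) : g • x = h • x :=
  congrArg Subtype.val
    (congrArg (fun σ => σ (⟨x, MulAction.mem_orbit_self x⟩ : MulAction.orbit G x)) hgh)

theorem card_orbit_le {G Ω : Type*} [Group G] [Fintype Ω] [MulAction G Ω] {x : Ω}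
    [Fintype (MulAction.orbit G x)] (h : (MulAction.orbit G x).ncard ≤ 3) :
    Fintype.card (MulAction.orbit G x) ≤ 3 := by
  rwa [← Nat.card_eq_fintype_card]

theorem commutator_smul_of_even {G Ω : Type*} [Group G] [Fintype Ω] [MulAction G Ω] {x : Ω}
    (hx : (MulAction.orbit G x).ncard ≤ 3) {g h : G} (hg : orbitSign x g = 1)
    (hh : orbitSign x h = 1) : ⁅g, h⁆ • x = x := by
  classical
  have := even_perm_commute (card_orbit_le hx) hg hh
  have h1 : ⁅g, h⁆ • x = (1 : G) • x := by
    apply smul_eq_of_toPermHom_orbit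
    rw [map_commutatorElement, commutatorElement_eq_one_iff_mul_comm.2 this, map_one]
  rwa [one_smul] at h1

theorem cube_smul_of_even {G Ω : Type*} [Group G] [Fintype Ω] [MulAction G Ω] {x : Ω}
    (hx : (MulAction.orbit G x).ncard ≤ 3) {g : G} (hg : orbitSign x g = 1) :
    g ^ 3 • x = x := by
  classical
  have := even_perm_cube (card_orbit_le hx) hg
  have h1 : g ^ 3 • x = (1 : G) • x := by
    apply smul_eq_of_toPermHom_orbit
    rw [map_pow, this, map_one]
  rwa [one_smul] at h1

/-- If all orbits on `Ω` have at most three points, the group induced on `Ω` has order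
`2 ^ r * 3 ^ s` with `2 * r + s ≤ |α|`, for every `α` on which the action determines that
on `Ω`. Here `3 ^ s` is the order induced by the subgroup `V` of elements that are even on every
orbit. It has a base `S` of `s` points, and the subgroup `D` of elements that are even on the orbits
of these points has index at most `2 ^ s` and induces an abelian group on `Ω`. -/
theorem index_of_small_orbits {G Ω α : Type*} [Group G] [Finite G] [Fintype Ω] [Fintype α]
    [MulAction G Ω] [MulAction G α] (hker : actKer G α ≤ actKer G Ω)
    (horb : ∀ x : Ω, (MulAction.orbit G x).ncard ≤ 3) :
    ∃ r s, (actKer G Ω).index = 2 ^ r * 3 ^ s ∧ 2 * r + s ≤ Nat.card α := by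
  classical
  have : Fact (Nat.Prime 2) := ⟨Nat.prime_two⟩
  have : Fact (Nat.Prime 3) := ⟨Nat.prime_three⟩
  set K := actKer G Ω with hK
  set V : Subgroup G := ⨅ x : Ω, (orbitSign (G := G) x).ker with hV
  have hVmem : ∀ g, g ∈ V ↔ ∀ x : Ω, orbitSign x g = 1 := by
    intro g
    simp [hV, Subgroup.mem_iInf, MonoidHom.mem_ker]
  have hsq : ∀ (x : Ω) (g : G), orbitSign x (g ^ 2) = 1 := by
    intro x g
    rw [map_pow, Int.units_sq]
  have hKV : K ≤ V := by
    intro g hg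
    rw [hVmem]
    intro x
    have h1 : MulAction.toPermHom G (MulAction.orbit G x) g = 1 := by
      ext y
      exact mem_actKer.1 hg y
    simp only [orbitSign, MonoidHom.comp_apply, h1, map_one]
  have hVn : V.Normal := by
    rw [hV]
    exact Subgroup.normal_iInf_normal fun x => inferInstance
  obtain ⟨s, hs⟩ := index_eq_pow_of_pow_mem (K.subgroupOf V) 3 (by
    intro g
    rw [Subgroup.mem_subgroupOf]
    exact mem_actKer.2 fun x => cube_smul_of_even (horb x) ((hVmem g).1 g.2 x))
  obtain ⟨r, hr⟩ := index_eq_pow_of_pow_mem V 2 (fun g => (hVmem _).2 fun x => hsq x g)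
  obtain ⟨c, ⟨S, hSc, hS⟩, hcs⟩ := exists_base_cardFactors (Ω := Ω) (3 ^ s) V
    (by rw [actKer_subgroup]; exact hs)
  rw [ArithmeticFunction.cardFactors_apply_prime_pow Nat.prime_three] at hcs
  set D : Subgroup G := ⨅ x : S, (orbitSign (G := G) (x : Ω)).ker with hD
  have hDmem : ∀ g, g ∈ D ↔ ∀ x ∈ S, orbitSign x g = 1 := by
    intro g
    simp [hD, Subgroup.mem_iInf, MonoidHom.mem_ker]
  have hDn : D.Normal := by
    rw [hD]
    exact Subgroup.normal_iInf_normal fun x => inferInstance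
  obtain ⟨r₂, hr₂⟩ := index_eq_pow_of_pow_mem D 2 (fun g => (hDmem _).2 fun x _ => hsq x g)
  have hr₂s : r₂ ≤ s := by
    have h1 : D.index ≤ ∏ x : S, (orbitSign (G := G) (x : Ω)).ker.index := Subgroup.index_iInf_le _
    have h2 : ∏ x : S, (orbitSign (G := G) (x : Ω)).ker.index ≤ ∏ x : S, 2 := by
      refine Finset.prod_le_prod' fun x _ => ?_
      rw [Subgroup.index_ker]
      refine (Subgroup.card_le_card_group _).trans ?_
      simp
    rw [Finset.prod_const, Finset.card_univ, Fintype.card_coe] at h2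
    have h3 := h1.trans h2
    rw [hr₂] at h3
    have := (Nat.pow_le_pow_iff_right (by norm_num : 1 < 2)).1 h3
    omega
  have hVD : V ≤ D := fun g hg => (hDmem g).2 fun x _ => (hVmem g).1 hg x
  have h1 := Subgroup.relIndex_mul_index hVD
  obtain ⟨r₁, -, hr₁⟩ := (Nat.dvd_prime_pow Nat.prime_two).1
    (show V.relIndex D ∣ 2 ^ r by rw [← hr, ← h1]; exact dvd_mul_right _ _)
  have hrr : r₁ + r₂ = r := by
    rw [hr₁, hr₂, hr, ← pow_add] at h1
    exact Nat.pow_right_injective (le_refl 2) h1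
  have h2 := Subgroup.relIndex_mul_relIndex K V D hKV hVD
  have h3 := Subgroup.relIndex_mul_index hKV
  have hs' : K.relIndex V = 3 ^ s := hs
  rw [hs', hr] at h3
  rw [hs', hr₁] at h2
  have hab := abelian_quotient_le (D := D) (α := α) (K.subgroupOf D) (by
    rintro ⟨g, hg⟩ ⟨h, hh⟩
    rw [Subgroup.mem_subgroupOf]
    change ⁅g, h⁆ ∈ K
    have hgV : ⁅g, h⁆ ∈ V := (hVmem _).2 fun x => by
      rw [map_commutatorElement, commutatorElement_eq_one_iff_mul_comm.2 (mul_comm _ _)]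
    have := hS ⟨⁅g, h⁆, hgV⟩ (fun x hx =>
      commutator_smul_of_even (horb x) ((hDmem g).1 hg x hx) ((hDmem h).1 hh x hx))
    exact mem_actKer.2 fun x => mem_actKer.1 this x) (by
    rw [actKer_subgroup]
    exact Subgroup.comap_mono hker) r₁ s (by
    change K.relIndex D = _
    rw [← h2, mul_comm])
  exact ⟨r, s, by rw [← h3, mul_comm], by omega⟩

/-- A base is found greedily, using points in orbits of size at least four until all orbits have
at most three points. -/
theorem exists_base_sixteen_pow {Ω α : Type*} [Fintype Ω] [Fintype α] (q : ℕ) :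
    ∀ (G : Type*) [Group G] [Finite G] [MulAction G Ω] [MulAction G α],
    actKer G α ≤ actKer G Ω → (actKer G Ω).index = q →
    ∃ c, HasBase G Ω c ∧ 16 ^ c ≤ q ^ 2 * 2 ^ Nat.card α := by
  induction q using Nat.strong_induction_on with
  | _ q ih =>
  intro G _ _ _ _ hker hq
  by_cases horb : ∀ x : Ω, (MulAction.orbit G x).ncard ≤ 3
  · obtain ⟨r, s, hrs, hn⟩ := index_of_small_orbits hker horb
    obtain ⟨c, hc, hcq⟩ := exists_base_cardFactors (Ω := Ω) _ G rfl
    refine ⟨c, hc, ?_⟩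
    rw [hrs, ArithmeticFunction.cardFactors_mul (by positivity) (by positivity),
      ArithmeticFunction.cardFactors_apply_prime_pow Nat.prime_two,
      ArithmeticFunction.cardFactors_apply_prime_pow Nat.prime_three] at hcq
    rw [← hq, hrs]
    calc 16 ^ c ≤ 16 ^ (r + s) := Nat.pow_le_pow_right (by norm_num) hcq
      _ = 16 ^ r * 16 ^ s := pow_add _ _ _
      _ ≤ 16 ^ r * 18 ^ s := by gcongr; norm_num
      _ = (2 ^ r * 3 ^ s) ^ 2 * 2 ^ (2 * r + s) := by
          rw [pow_add, pow_mul, mul_pow, ← pow_mul, ← pow_mul, mul_comm r 2, mul_comm s 2,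
            pow_mul, pow_mul, show (16 : ℕ) = 2 ^ 2 * 2 ^ 2 by norm_num,
            show (18 : ℕ) = 3 ^ 2 * 2 by norm_num, mul_pow, mul_pow]
          ring
      _ ≤ _ := by gcongr; norm_num
  · push Not at horb
    obtain ⟨ω, hω⟩ := horb
    have hmul := stabilizer_index_mul (G := G) ω
    rw [hq, MulAction.index_stabilizer] at hmul
    have h0' : (actKer (MulAction.stabilizer G ω) Ω).index ≠ 0 :=
      Subgroup.index_ne_zero_of_finite
    have hpos := Nat.pos_of_ne_zero h0'
    obtain ⟨c, hc, hcq⟩ := ih _ (by rw [← hmul]; nlinarith) (MulAction.stabilizer G ω) (by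
      rw [actKer_subgroup, actKer_subgroup]
      exact Subgroup.comap_mono hker) rfl
    refine ⟨c + 1, HasBase.of_stabilizer ω hc, ?_⟩
    have h4 : 4 ≤ (MulAction.orbit G ω).ncard := hω
    calc 16 ^ (c + 1) = 16 ^ c * 4 ^ 2 := by rw [pow_succ]; norm_num
      _ ≤ ((actKer (MulAction.stabilizer G ω) Ω).index ^ 2 * 2 ^ Nat.card α) *
          (MulAction.orbit G ω).ncard ^ 2 := by gcongr
      _ = _ := by rw [← hmul]; ring

/-! ### Bases of primitive groups -/

/-- Bochert's argument: a primitive group of degree `n` not containing the alternating group has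
a base of size at most `n / 2`. Otherwise let `Δ` be a minimum base: as its complement and
`Δ` minus a point `d` are no bases, there are two elements with supports meeting in `d` alone, and
their commutator is a 3-cycle. -/
theorem bochert {α : Type*} [Fintype α] [DecidableEq α] (G : Subgroup (Equiv.Perm α))
    (hprim : MulAction.IsPreprimitive G α) (hA : ¬ alternatingGroup α ≤ G) :
    ∃ Δ : Finset α, 2 * Δ.card ≤ Fintype.card α ∧ ∀ g ∈ G, (∀ a ∈ Δ, g a = a) → g = 1 := by
  classical
  obtain ⟨Δ, hΔ, hmin⟩ := Finset.exists_min_image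
    (Finset.univ.filter fun Δ : Finset α => ∀ g ∈ G, (∀ a ∈ Δ, g a = a) → g = 1) Finset.card
    ⟨Finset.univ, by
      simp only [Finset.mem_filter, Finset.mem_univ, true_and]
      intro g _ hg
      ext a
      exact hg a trivial⟩
  simp only [Finset.mem_filter, Finset.mem_univ, true_and] at hΔ hmin
  refine ⟨Δ, ?_, hΔ⟩
  by_contra hlt
  push Not at hlt
  have hsmall : ∀ E : Finset α, E.card < Δ.card → ∃ g ∈ G, (∀ a ∈ E, g a = a) ∧ g ≠ 1 := by
    intro E hE
    by_contra h
    push Not at h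
    have := hmin E h
    omega
  obtain ⟨y, hyG, hyfix, hy1⟩ := hsmall Δᶜ (by rw [Finset.card_compl]; omega)
  obtain ⟨d, hd⟩ : ∃ d, y d ≠ d := by
    by_contra h
    push Not at h
    exact hy1 (Equiv.ext h)
  have hyc : ∀ a, a ∉ Δ → y a = a := fun a ha => hyfix a (Finset.mem_compl.2 ha)
  have hdΔ : d ∈ Δ := by
    by_contra h
    exact hd (hyc d h)
  obtain ⟨x, hxG, hxfix, hx1⟩ := hsmall (Δ.erase d) (Finset.card_erase_lt_of_mem hdΔ)
  have hxe : ∀ a, a ∈ Δ → a ≠ d → x a = a := fun a ha had =>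
    hxfix a (Finset.mem_erase.2 ⟨had, ha⟩)
  have hxd : x d ≠ d := by
    intro h
    refine hx1 (hΔ x hxG fun a ha => ?_)
    by_cases had : a = d
    · rw [had, h]
    · exact hxe a ha had
  have hyΔ : ∀ a, y a ∈ Δ ↔ a ∈ Δ := by
    intro a
    constructor
    · intro h
      by_contra ha
      rw [hyc a ha] at h
      exact ha h
    · intro h
      by_contra ha
      have := y.injective (hyc _ ha)
      rw [this] at ha
      exact ha h
  have hxdΔ : x d ∉ Δ := fun h => hxd (x.injective (hxe _ h hxd))
  have hyd : y d ∈ Δ := (hyΔ d).2 hdΔ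
  have hne : x d ≠ y d := fun h => hxdΔ (h ▸ hyd)
  have hcyc : x * y * x⁻¹ * y⁻¹ = Equiv.swap d (y d) * Equiv.swap d (x d) := by
    rw [mul_inv_eq_iff_eq_mul, mul_inv_eq_iff_eq_mul]
    -- evaluate `x * y = c * y * x` at each point
    ext z
    simp only [Equiv.Perm.mul_apply]
    by_cases hzd : z = d
    · subst hzd
      rw [hxe _ hyd hd, hyc _ hxdΔ, Equiv.swap_apply_right, Equiv.swap_apply_left]
    by_cases hzΔ : z ∈ Δ
    · rw [hxe z hzΔ hzd]
      by_cases hyz : y z = d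
      · rw [hyz, Equiv.swap_apply_left, Equiv.swap_apply_of_ne_of_ne hxd hne]
      · have h1 : y z ∈ Δ := (hyΔ z).2 hzΔ
        rw [hxe _ h1 hyz, Equiv.swap_apply_of_ne_of_ne hyz (fun h => hxdΔ (by rw [← h]; exact h1)),
          Equiv.swap_apply_of_ne_of_ne hyz (fun h => hzd (y.injective h))]
    · rw [hyc z hzΔ]
      by_cases hxz : x z = d
      · rw [hxz, Equiv.swap_apply_of_ne_of_ne hd hne.symm, Equiv.swap_apply_right]
      · have h1 : x z ∉ Δ := fun h => by
          have := x.injective (hxe _ h hxz)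
          rw [this] at h
          exact hzΔ h
        rw [hyc _ h1, Equiv.swap_apply_of_ne_of_ne hxz (fun h => hzd (x.injective h)),
          Equiv.swap_apply_of_ne_of_ne hxz (fun h => h1 (by rw [h]; exact hyd))]
  have hmem : x * y * x⁻¹ * y⁻¹ ∈ G :=
    G.mul_mem (G.mul_mem (G.mul_mem hxG hyG) (G.inv_mem hxG)) (G.inv_mem hyG)
  refine hA (Equiv.Perm.alternatingGroup_le_of_isPreprimitive_of_isThreeCycle_mem hprim
    (g := x * y * x⁻¹ * y⁻¹) ?_ hmem)
  rw [hcyc]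
  exact Equiv.Perm.isThreeCycle_swap_mul_swap_same hd.symm hxd.symm hne.symm

/-! ### The induction on the degree -/

/-- The bound on base sizes proved by induction on the degree `n`; truncated subtraction
makes it `0` for `n ≤ 1`. -/
def baseBound (n : ℕ) : ℕ := (3 * n - 4) / 2

theorem choose_add_choose_le (m : ℕ) : ∀ k, m.choose k + m.choose (k + 1) ≤ 2 ^ m := by
  induction m with
  | zero => intro k; cases k <;> simp
  | succ m ih =>
    intro k
    cases k with
    | zero =>
      have := Nat.lt_two_pow_self (n := m + 1)
      simp only [Nat.choose_zero_right, zero_add, Nat.choose_one_right]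
      omega
    | succ k =>
      have h1 := ih k
      have h2 := ih (k + 1)
      rw [Nat.choose_succ_succ' m k, Nat.choose_succ_succ' m (k + 1), pow_succ]
      omega

theorem choose_le_two_pow_pred {n : ℕ} (hn : 1 ≤ n) (k : ℕ) : n.choose k ≤ 2 ^ (n - 1) := by
  obtain ⟨m, rfl⟩ : ∃ m, n = m + 1 := ⟨n - 1, by omega⟩
  cases k with
  | zero => simpa using Nat.one_le_two_pow
  | succ k =>
    rw [Nat.choose_succ_succ]
    exact choose_add_choose_le m k

theorem centralBinom_le {k : ℕ} (hk : 5 ≤ k) : 4 * k.centralBinom ≤ 2 ^ (2 * k) := by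
  induction k, hk using Nat.le_induction with
  | base => simp [Nat.centralBinom, Nat.choose]
  | succ k hk ih =>
    have h := Nat.succ_mul_centralBinom_succ k
    have h2 : (k + 1).centralBinom ≤ 4 * k.centralBinom := by
      have : (k + 1) * (k + 1).centralBinom ≤ (k + 1) * (4 * k.centralBinom) := by
        rw [h]; nlinarith [Nat.zero_le k.centralBinom]
      exact Nat.le_of_mul_le_mul_left this (by omega)
    rw [show 2 * (k + 1) = 2 * k + 2 by ring, pow_add]
    omega

/-- The arithmetic of the primitive case. If `2 * k < n`, the bound `n.choose k ≤ 2 ^ (n - 1)` is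
enough; the central binomial coefficient needs a further factor of two, with `n = 6, 8` computed
directly. -/
theorem baseBound_primitive {n k c : ℕ} (hn : 5 ≤ n) (hk : 2 * k ≤ n)
    (hc : 16 ^ c ≤ (n.choose k) ^ 2 * 2 ^ n) :
    baseBound k + c + 1 ≤ baseBound n := by
  have key : ∀ e, n.choose k ≤ 2 ^ e → 4 * c ≤ 2 * e + n := by
    intro e he
    have : 2 ^ (4 * c) ≤ 2 ^ (2 * e + n) := by
      calc 2 ^ (4 * c) = 16 ^ c := by rw [pow_mul]; norm_num
        _ ≤ (n.choose k) ^ 2 * 2 ^ n := hc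
        _ ≤ (2 ^ e) ^ 2 * 2 ^ n := by gcongr
        _ = _ := by rw [pow_add, ← pow_mul, mul_comm e 2]
    exact (Nat.pow_le_pow_iff_right (by norm_num)).1 this
  have h1 := key (n - 1) (choose_le_two_pow_pred (by omega) k)
  by_cases hnk : 2 * k = n
  · subst hnk
    by_cases hk5 : 5 ≤ k
    · have h2 := key (2 * k - 2) (by
        have h3 := centralBinom_le hk5
        rw [Nat.centralBinom, show 2 * k = (2 * k - 2) + 2 by omega, pow_add,
          ← show 2 * k = (2 * k - 2) + 2 by omega] at h3
        omega)
      unfold baseBound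
      omega
    · have : k = 3 ∨ k = 4 := by omega
      rcases this with rfl | rfl
      · have : c < 4 := by
          rw [← Nat.pow_lt_pow_iff_right (by norm_num : 1 < 16)]
          refine hc.trans_lt ?_
          norm_num [Nat.choose]
        unfold baseBound
        omega
      · have : c < 6 := by
          rw [← Nat.pow_lt_pow_iff_right (by norm_num : 1 < 16)]
          refine hc.trans_lt ?_
          norm_num [Nat.choose]
        unfold baseBound
        omega
  · unfold baseBound
    omega

theorem baseBound_blocks {a b : ℕ} (ha : 2 ≤ a) (hb : 2 ≤ b) (hab : 5 ≤ a * b) :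
    b * baseBound a + baseBound b + 1 ≤ baseBound (a * b) := by
  have h1 : 2 * baseBound a + 4 ≤ 3 * a := by unfold baseBound; omega
  have h2 : 2 * (b * baseBound a) + 4 * b ≤ 3 * (a * b) := by nlinarith
  have h3 : 2 * baseBound b + 4 ≤ 3 * b := by unfold baseBound; omega
  have h4 : b = 2 → baseBound b = 1 := by rintro rfl; rfl
  have h5 : b = 2 → a * b = 2 * a := by rintro rfl; ring
  generalize baseBound b = u at *
  generalize b * baseBound a = w at *
  generalize a * b = n at *
  unfold baseBound
  omega

universe u v w

/-- The bound `baseBound n` holds for every finite group `G` acting on `Ω` and on a set of `n`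
points such that elements fixing all of these points act trivially on `Ω`. -/
def BoundHolds (Ω : Type w) (n : ℕ) : Prop :=
  ∀ (G : Type u) [Group G] [Finite G] [MulAction G Ω] (α : Type v) [Finite α] [MulAction G α],
    Nat.card α = n → actKer G α ≤ actKer G Ω → HasBase G Ω (baseBound n)

theorem BoundHolds.on_set {Ω : Type w} {n : ℕ} (h : BoundHolds.{u, v} Ω n) {G : Type u} [Group G]
    [Finite G] [MulAction G Ω] {α : Type v} [MulAction G α] {A : Set α} (hfin : A.Finite)
    (hA : ∀ g : G, ∀ a ∈ A, g • a ∈ A) (hn : A.ncard = n)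
    (hfix : ∀ g : G, (∀ a ∈ A, g • a = a) → g ∈ actKer G Ω) : HasBase G Ω (baseBound n) := by
  have : Finite (invSub A hA) := hfin
  exact h G (invSub A hA) hn (fun g hg => hfix g (mem_actKer_invSub.1 hg))

/-- Bases for the actions on several invariant sets can be put together. -/
theorem hasBase_of_family {Ω : Type w} {α : Type v} [Finite α] (t : Finset (Set α))
    (hP : ∀ A ∈ t, BoundHolds.{u, v} Ω A.ncard) :
    ∀ (G : Type u) [Group G] [Finite G] [MulAction G Ω] [MulAction G α],
    (∀ A ∈ t, ∀ g : G, ∀ a ∈ A, g • a ∈ A) →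
    (∀ g : G, (∀ A ∈ t, ∀ a ∈ A, g • a = a) → g ∈ actKer G Ω) →
    HasBase G Ω (∑ A ∈ t, baseBound A.ncard) := by
  classical
  induction t using Finset.induction_on with
  | empty =>
    intro G _ _ _ _ _ hfix
    exact HasBase.of_trivial fun g => hfix g (by simp)
  | insert A t hAt ih =>
    intro G _ _ _ _ hinv hfix
    rw [Finset.sum_insert hAt, add_comm]
    refine HasBase.two_step (fixingSubgroup G A) ?_ ?_
    · refine ih (fun B hB => hP B (Finset.mem_insert_of_mem hB)) (fixingSubgroup G A)
        (fun B hB g a ha => hinv B (Finset.mem_insert_of_mem hB) g a ha) ?_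
      intro g hg
      rw [actKer_subgroup]
      refine hfix g fun B hB => ?_
      rcases Finset.mem_insert.1 hB with rfl | hB
      · exact fun a ha => (mem_fixingSubgroup_iff G).1 g.2 a ha
      · exact hg B hB
    · intro X hX
      refine (hP A (Finset.mem_insert_self _ _)).on_set (Set.toFinite A)
        (fun g a ha => hinv A (Finset.mem_insert_self _ _) g a ha) rfl ?_
      intro g hg
      rw [actKer_subgroup]
      exact hX ⟨g.2, (mem_fixingSubgroup_iff G).2 hg⟩

/-- One point is saved if `G` is intransitive on `α`, by treating an orbit and its complement
separately. -/
theorem hasBase_intransitive {Ω : Type w} {n : ℕ} (hn : 5 ≤ n)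
    (ih : ∀ m < n, BoundHolds.{u, v} Ω m) (G : Type u) [Group G] [Finite G] [MulAction G Ω]
    (α : Type v) [Finite α] [MulAction G α] (hα : Nat.card α = n)
    (hker : actKer G α ≤ actKer G Ω) (a b : α) (hab : b ∉ MulAction.orbit G a) :
    HasBase G Ω (baseBound n - 1) := by
  classical
  set A : Set α := MulAction.orbit G a with hA
  have haA : a ∈ A := MulAction.mem_orbit_self a
  have hsum : A.ncard + Aᶜ.ncard = n := by rw [Set.ncard_add_ncard_compl, hα]
  have h1 : 0 < A.ncard := (Set.ncard_pos (Set.toFinite _)).2 ⟨a, haA⟩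
  have h2 : 0 < Aᶜ.ncard := (Set.ncard_pos (Set.toFinite _)).2 ⟨b, hab⟩
  have hne : A ≠ Aᶜ := fun h => absurd haA (by rw [h] at haA; exact haA)
  have := hasBase_of_family (Ω := Ω) {A, Aᶜ} (by
    intro B hB
    simp only [Finset.mem_insert, Finset.mem_singleton] at hB
    rcases hB with rfl | rfl <;> exact ih _ (by omega)) G (by
    intro B hB g x hx
    simp only [Finset.mem_insert, Finset.mem_singleton] at hB
    rcases hB with rfl | rfl
    · exact (smul_mem_orbit_iff' g).2 hx
    · exact fun h => hx ((smul_mem_orbit_iff' g).1 h)) (by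
    intro g hg
    refine hker (mem_actKer.2 fun x => ?_)
    by_cases hx : x ∈ A
    · exact hg A (by simp) x hx
    · exact hg Aᶜ (by simp) x hx)
  rw [Finset.sum_pair hne] at this
  refine this.mono ?_
  generalize A.ncard = p at *
  generalize Aᶜ.ncard = q at *
  unfold baseBound
  omega

open scoped Pointwise in
/-- One point is saved if `G` is imprimitive on `α`: combine bases for the kernel of the action on
the set `𝓑` of blocks, coming from the single blocks, with one coming from the action on `𝓑`. -/
theorem hasBase_imprimitive {Ω : Type w} {n : ℕ} (hn : 5 ≤ n)
    (ih : ∀ m < n, BoundHolds.{u, v} Ω m) (G : Type u) [Group G] [Finite G] [MulAction G Ω]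
    (α : Type v) [Finite α] [MulAction G α] [MulAction.IsPretransitive G α]
    (hα : Nat.card α = n) (hker : actKer G α ≤ actKer G Ω) (B : Set α)
    (hB : MulAction.IsBlock G B) (hB' : ¬ MulAction.IsTrivialBlock B) :
    HasBase G Ω (baseBound n - 1) := by
  classical
  rw [MulAction.IsTrivialBlock, not_or] at hB'
  have hB2 : 2 ≤ B.ncard := (Set.one_lt_ncard (Set.toFinite _)).2
    (Set.not_subsingleton_iff.1 hB'.1)
  have hne : B.Nonempty := (Set.not_subsingleton_iff.1 hB'.1).nonempty
  have hmul := hB.ncard_block_mul_ncard_orbit_eq hne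
  rw [hα] at hmul
  set 𝓑 : Set (Set α) := MulAction.orbit G B with h𝓑
  have hlt : B.ncard < n := by
    rw [← hα]
    exact Set.ncard_lt_card hB'.2
  have hb2 : 2 ≤ 𝓑.ncard := by
    by_contra h
    have : 𝓑.ncard = 0 ∨ 𝓑.ncard = 1 := by omega
    rcases this with h | h <;> rw [h] at hmul <;> omega
  have hbn : 𝓑.ncard < n := by nlinarith
  have hbase : HasBase (fixingSubgroup G 𝓑) Ω (𝓑.ncard * baseBound B.ncard) := by
    have hcard : ∀ C ∈ (Set.toFinite 𝓑).toFinset, C.ncard = B.ncard := by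
      intro C hC
      rw [Set.Finite.mem_toFinset] at hC
      obtain ⟨g, rfl⟩ := hC
      exact Set.ncard_image_of_injective _ (MulAction.injective g)
    have := hasBase_of_family (Ω := Ω) (Set.toFinite 𝓑).toFinset (by
      intro C hC
      rw [hcard C hC]
      exact ih _ hlt) (fixingSubgroup G 𝓑) (by
      intro C hC g a ha
      rw [Set.Finite.mem_toFinset] at hC
      have h1 : (g : G) • C = C := (mem_fixingSubgroup_iff G).1 g.2 C hC
      rw [← h1]
      exact Set.smul_mem_smul_set ha) (by
      intro g hg
      rw [actKer_subgroup]
      refine hker (mem_actKer.2 fun x => ?_)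
      obtain ⟨b, hb⟩ := hne
      obtain ⟨k, rfl⟩ := MulAction.exists_smul_eq G b x
      exact hg (k • B) (by rw [Set.Finite.mem_toFinset]; exact ⟨k, rfl⟩) _
        (Set.smul_mem_smul_set hb))
    rwa [Finset.sum_congr rfl (fun C hC => by rw [hcard C hC]), Finset.sum_const, smul_eq_mul,
      ← Set.ncard_eq_toFinset_card] at this
  have h2 := HasBase.two_step (c₂ := baseBound 𝓑.ncard) _ hbase (by
    intro X hX
    refine (ih _ hbn).on_set (α := Set α) (A := 𝓑) (Set.toFinite _)
      (fun g C hC => (smul_mem_orbit_iff' (g : G)).2 hC) rfl ?_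
    intro g hg
    rw [actKer_subgroup]
    exact hX ⟨g.2, (mem_fixingSubgroup_iff G).2 hg⟩)
  refine h2.mono ?_
  have := baseBound_blocks hB2 hb2 (by omega)
  rw [hmul] at this
  omega

open scoped Pointwise in
/-- One point is saved if `G` is primitive on `α` and does not induce the alternating group: combine
a base for the setwise stabiliser `K` of a small base `Δ` on `α` with one for a subgroup that meets
`K` in the kernel only, and hence induces a group of order at most `n.choose |Δ|` on `Ω`. -/
theorem hasBase_primitive {Ω : Type w} [Fintype Ω] {n : ℕ} (hn : 5 ≤ n)
    (ih : ∀ m < n, BoundHolds.{u, v} Ω m) (G : Type u) [Group G] [Finite G] [MulAction G Ω]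
    (α : Type v) [Fintype α] [DecidableEq α] [MulAction G α] [MulAction.IsPreprimitive G α]
    (hα : Nat.card α = n) (hker : actKer G α ≤ actKer G Ω)
    (hA : ¬ alternatingGroup α ≤ (MulAction.toPermHom G α).range) :
    HasBase G Ω (baseBound n - 1) := by
  classical
  have hprim : MulAction.IsPreprimitive (MulAction.toPermHom G α).range α :=
    MulAction.IsPreprimitive.of_surjective (M := G) (α := α)
      (φ := (MulAction.toPermHom G α).rangeRestrict)
      (f := { toFun := id, map_smul' := fun g a => rfl }) Function.surjective_id
  obtain ⟨Δ, hΔc, hΔ⟩ := bochert _ hprim hA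
  rw [← Nat.card_eq_fintype_card, hα] at hΔc
  set K := MulAction.stabilizer G (Δ : Set α) with hK
  have hKb : HasBase K Ω (baseBound Δ.card) := by
    refine (ih Δ.card (by omega)).on_set (A := (Δ : Set α)) (Finset.finite_toSet Δ) ?_
      (Set.ncard_coe_finset Δ) ?_
    · intro g a ha
      have h1 : (g : G) • (Δ : Set α) = Δ := g.2
      rw [← h1]
      exact Set.smul_mem_smul_set ha
    · intro g hg
      rw [actKer_subgroup]
      refine hker ?_
      exact hΔ (MulAction.toPermHom G α g) ⟨g, rfl⟩ hg
  have hKi : K.index ≤ n.choose Δ.card := by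
    rw [MulAction.index_stabilizer]
    have hsub : MulAction.orbit G (Δ : Set α) ⊆
        ((Finset.powersetCard Δ.card (Finset.univ : Finset α)).image
          (fun s : Finset α => (s : Set α)) : Finset (Set α)) := by
      rintro _ ⟨g, rfl⟩
      simp only [Finset.coe_image, Set.mem_image, Finset.mem_coe, Finset.mem_powersetCard]
      refine ⟨Δ.image (g • ·), ⟨Finset.subset_univ _,
        Finset.card_image_of_injective _ (MulAction.injective g)⟩, ?_⟩
      rw [Finset.coe_image]
      rfl
    refine (Set.ncard_le_ncard hsub (Finset.finite_toSet _)).trans ?_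
    rw [Set.ncard_coe_finset]
    refine Finset.card_image_le.trans ?_
    rw [Finset.card_powersetCard, Finset.card_univ, ← Nat.card_eq_fintype_card, hα]
  -- the case `c = 0` shows that the subtraction below is not truncated
  have h0 := baseBound_primitive (c := 0) hn hΔc (by
    have : 0 < n.choose Δ.card := Nat.choose_pos (by omega)
    rw [pow_zero]
    exact Nat.one_le_iff_ne_zero.2 (by positivity))
  have h2 := HasBase.two_step (c₂ := baseBound n - 1 - baseBound Δ.card) K hKb (by
    intro X hX
    obtain ⟨c, hc, hcq⟩ := exists_base_sixteen_pow (Ω := Ω) (α := α) _ X (by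
      rw [actKer_subgroup, actKer_subgroup]
      exact Subgroup.comap_mono hker) rfl
    refine hc.mono ?_
    have hq : (actKer X Ω).index ≤ n.choose Δ.card := by
      rw [actKer_subgroup_index]
      refine le_trans ?_ hKi
      calc (actKer G Ω).relIndex X ≤ (K ⊓ X).relIndex X :=
            Subgroup.relIndex_le_of_le_left (by rw [inf_comm]; exact hX)
              Subgroup.index_ne_zero_of_finite
        _ = K.relIndex X := Subgroup.inf_relIndex_right _ _
        _ ≤ K.relIndex ⊤ :=
            Subgroup.relIndex_le_of_le_right le_top Subgroup.index_ne_zero_of_finite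
        _ = K.index := Subgroup.relIndex_top_right _
    have := baseBound_primitive (c := c) hn hΔc (hcq.trans (by rw [hα]; gcongr))
    omega)
  exact h2.mono (by omega)

/-- One point is saved unless the whole alternating group is induced on `α`. -/
theorem hasBase_of_not_alternating {Ω : Type w} [Fintype Ω] {n : ℕ} (hn : 5 ≤ n)
    (ih : ∀ m < n, BoundHolds.{u, v} Ω m) (G : Type u) [Group G] [Finite G] [MulAction G Ω]
    (α : Type v) [Fintype α] [DecidableEq α] [MulAction G α]
    (hα : Nat.card α = n) (hker : actKer G α ≤ actKer G Ω)
    (hA : ¬ alternatingGroup α ≤ (MulAction.toPermHom G α).range) :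
    HasBase G Ω (baseBound n - 1) := by
  by_cases htr : ∀ a b : α, b ∈ MulAction.orbit G a
  swap
  · push Not at htr
    obtain ⟨a, b, hab⟩ := htr
    exact hasBase_intransitive hn ih G α hα hker a b hab
  have : MulAction.IsPretransitive G α := ⟨fun a b => htr a b⟩
  by_cases hprim : ∀ B : Set α, MulAction.IsBlock G B → MulAction.IsTrivialBlock B
  · have : MulAction.IsPreprimitive G α := ⟨fun {B} => hprim B⟩
    exact hasBase_primitive hn ih G α hα hker hA
  · push Not at hprim
    obtain ⟨B, hB, hB'⟩ := hprim
    exact hasBase_imprimitive hn ih G α hα hker B hB hB'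

theorem boundHolds {Ω : Type w} [Fintype Ω] (n : ℕ) : BoundHolds.{u, v} Ω n := by
  induction n using Nat.strong_induction_on with
  | _ n ih =>
  intro G _ _ _ α _ _ hα hker
  classical
  have := Fintype.ofFinite α
  by_cases hn : 5 ≤ n
  swap
  · obtain ⟨c, hc, hcq⟩ := exists_base_two_pow (G := G) (Ω := Ω)
    refine hc.mono ?_
    have h1 : (actKer G Ω).index ≤ n.factorial := by
      rw [← hα]
      exact Nat.le_of_dvd (Nat.factorial_pos _) ((Subgroup.index_dvd_of_le hker).trans
        actKer_index_dvd)
    have h2 := hcq.trans h1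
    have h3 : c < baseBound n + 1 := by
      rw [← Nat.pow_lt_pow_iff_right (by norm_num : 1 < 2)]
      refine h2.trans_lt ?_
      have : n < 5 := by omega
      interval_cases n <;> decide
    omega
  have hpos : 1 ≤ baseBound n := by unfold baseBound; omega
  by_cases hA : alternatingGroup α ≤ (MulAction.toPermHom G α).range
  swap
  · exact (hasBase_of_not_alternating hn ih G α hα hker hA).mono (by omega)
  by_cases hω : ∃ ω : Ω, ¬ alternatingGroup α ≤
      (MulAction.toPermHom (MulAction.stabilizer G ω) α).range
  · obtain ⟨ω, hω⟩ := hω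
    have := hasBase_of_not_alternating hn ih (MulAction.stabilizer G ω) α hα (by
      rw [actKer_subgroup, actKer_subgroup]
      exact Subgroup.comap_mono hker) hω
    exact (HasBase.of_stabilizer ω this).mono (by omega)
  push Not at hω
  -- every element inducing an even permutation of `α` now fixes every point of `Ω`
  set W := (Equiv.Perm.sign.comp (MulAction.toPermHom G α)).ker with hW
  have hWle : W ≤ actKer G Ω := by
    intro g hg
    refine mem_actKer.2 fun ω => ?_
    obtain ⟨h, hh⟩ := hω ω (show MulAction.toPermHom G α g ∈ alternatingGroup α from hg)
    have h1 : g⁻¹ * (h : G) ∈ actKer G α := by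
      refine mem_actKer.2 fun a => ?_
      rw [mul_smul, inv_smul_eq_iff]
      exact congrArg (fun σ : Equiv.Perm α => σ a) hh
    have h2 := mem_actKer.1 (hker h1) ω
    rw [mul_smul, inv_smul_eq_iff, show (h : G) • ω = ω from h.2] at h2
    exact h2.symm
  have hW2 : W.index ≤ 2 := by
    rw [hW, Subgroup.index_ker]
    refine (Subgroup.card_le_card_group _).trans ?_
    simp
  obtain ⟨c, hc, hcq⟩ := exists_base_two_pow (G := G) (Ω := Ω)
  refine hc.mono ?_
  have h1 : (actKer G Ω).index ≤ 2 :=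
    (Nat.le_of_dvd (Nat.pos_of_ne_zero Subgroup.index_ne_zero_of_finite)
      (Subgroup.index_dvd_of_le hWle)).trans hW2
  have h3 : c ≤ 1 := by
    rw [← Nat.pow_le_pow_iff_right (by norm_num : 1 < 2)]
    exact hcq.trans (by simpa using h1)
  omega

/-- If the pointwise stabiliser of `Ω'` is contained in the pointwise stabiliser of `Ω`,
then there is `S ⊆ Ω` with `|S| ≤ 3|Ω'|/2` whose pointwise stabiliser equals that of `Ω`. -/
theorem stmt_1 {Γ Ω Ω' : Type*} [Group Γ] [Fintype Ω] [Fintype Ω']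
    [MulAction Γ Ω] [MulAction Γ Ω']
    (h : ∀ γ : Γ, (∀ x : Ω', γ • x = x) → ∀ x : Ω, γ • x = x) :
    ∃ S : Finset Ω, (S.card : ℝ) ≤ 3 * (Fintype.card Ω' : ℝ) / 2 ∧
      ∀ γ : Γ, (∀ s ∈ S, γ • s = s) ↔ ∀ x : Ω, γ • x = x := by
  -- replace `Γ` by the finite group it induces on the disjoint union of `Ω` and `Ω'`
  let f : Γ →* Equiv.Perm Ω × Equiv.Perm Ω' :=
    (MulAction.toPermHom Γ Ω).prod (MulAction.toPermHom Γ Ω')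
  let _ : MulAction f.range Ω :=
    MulAction.compHom Ω ((MonoidHom.fst (Equiv.Perm Ω) (Equiv.Perm Ω')).comp f.range.subtype)
  let _ : MulAction f.range Ω' :=
    MulAction.compHom Ω' ((MonoidHom.snd (Equiv.Perm Ω) (Equiv.Perm Ω')).comp f.range.subtype)
  obtain ⟨S, hSc, hS⟩ := boundHolds (Ω := Ω) _ f.range Ω' rfl (by
    rintro ⟨_, γ, rfl⟩ hγ
    exact mem_actKer.2 (h γ (mem_actKer.1 hγ)))
  refine ⟨S, ?_, fun γ => ⟨fun hγ => ?_, fun hγ s _ => hγ s⟩⟩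
  · have h1 : 2 * S.card ≤ 3 * Fintype.card Ω' := by
      rw [Nat.card_eq_fintype_card] at hSc
      unfold baseBound at hSc
      omega
    have h2 : (2 * S.card : ℝ) ≤ 3 * Fintype.card Ω' := by exact_mod_cast h1
    linarith
  · exact mem_actKer.1 (hS ⟨f γ, γ, rfl⟩ hγ)
end

section
/- Let $\Gamma$ be a group acting on two finite sets $\Omega$ and $\Omega'$ with $|\Omega'| \geq 1$. Suppose that the pointwise stabiliser of $\Omega'$ in $\Gamma$ is contained in the pointwise stabiliser of $\Omega$ in $\Gamma$. Then there exists a subset $S \subseteq \Omega$ such that $|S| \leq |\Omega'| \log_2 |\Omega'|$ and the pointwise stabiliser of $S$ in $\Gamma$ equals the pointwise stabiliser of $\Omega$ in $\Gamma$. -/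
/-!
Adding a point of `Ω` to a set `S` either leaves its pointwise stabiliser unchanged or shrinks it
by an index of at least `2`. So a largest `S` among those with `2 ^ |S| ≤ [Γ : Γ_(S)]` satisfies
`Γ_(S) = Γ_(Ω)`. On the other hand `Γ_(S) ≥ Γ_(Ω) ≥ Γ_(Ω')`, and `Γ_(Ω')` is the kernel of
`Γ → Sym(Ω')`, so `[Γ : Γ_(S)] ≤ |Ω'|! ≤ |Ω'| ^ |Ω'|`; taking logarithms bounds `|S|`.
-/

/-- The kernel of an action on a finite set has index at most `n! ≤ n ^ n`. The index is also
shown to be nonzero, which rules out the junk value `0` that stands for infinite index. -/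
lemma index_ker_toPermHom_bound (Γ Ω' : Type*) [Group Γ] [Fintype Ω'] [MulAction Γ Ω'] :
    (MulAction.toPermHom Γ Ω').ker.index ≠ 0 ∧
      (MulAction.toPermHom Γ Ω').ker.index ≤ Fintype.card Ω' ^ Fintype.card Ω' := by
  classical
  rw [Subgroup.index_ker]
  refine ⟨Nat.card_pos.ne', ?_⟩
  calc Nat.card (MulAction.toPermHom Γ Ω').range
      ≤ Nat.card (Equiv.Perm Ω') := Subgroup.card_le_card_group _
    _ = (Fintype.card Ω').factorial := by rw [Nat.card_eq_fintype_card, Fintype.card_perm]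
    _ ≤ _ := Nat.factorial_le_pow _

lemma two_mul_index_le_of_lt {G : Type*} [Group G] {H K : Subgroup G} (hHK : H < K)
    (hH : H.index ≠ 0) : 2 * K.index ≤ H.index := by
  have hmul := Subgroup.relIndex_mul_index hHK.le
  have h0 : H.relIndex K ≠ 0 := fun h0 => hH (by rw [← hmul, h0, zero_mul])
  have h1 : H.relIndex K ≠ 1 := fun h1 => hHK.not_ge (Subgroup.relIndex_eq_one.mp h1)
  rw [← hmul]
  exact Nat.mul_le_mul_right _ (by omega)

/-- Elementary version: if the pointwise stabiliser of `Ω'` (with `|Ω'| ≥ 1`) is contained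
in the pointwise stabiliser of `Ω`, then there is `S ⊆ Ω` with `|S| ≤ |Ω'| * log₂ |Ω'|`
whose pointwise stabiliser equals that of `Ω`. -/
theorem stmt_4 {Γ Ω Ω' : Type*} [Group Γ] [Fintype Ω] [Fintype Ω']
    [MulAction Γ Ω] [MulAction Γ Ω'] (hΩ' : 1 ≤ Fintype.card Ω')
    (h : ∀ γ : Γ, (∀ x : Ω', γ • x = x) → ∀ x : Ω, γ • x = x) :
    ∃ S : Finset Ω,
      (S.card : ℝ) ≤ (Fintype.card Ω' : ℝ) * Real.logb 2 (Fintype.card Ω') ∧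
      ∀ γ : Γ, (∀ s ∈ S, γ • s = s) ↔ ∀ x : Ω, γ • x = x := by
  classical
  obtain ⟨hker0, hkerle⟩ := index_ker_toPermHom_bound Γ Ω'
  have hle (S : Finset Ω) :
      (MulAction.toPermHom Γ Ω').ker ≤ fixingSubgroup Γ (S : Set Ω) := by
    intro γ hγ
    rw [mem_fixingSubgroup_iff]
    exact fun y _ => h γ (fun x => Equiv.congr_fun (MonoidHom.mem_ker.mp hγ) x) y
  have hdvd (S : Finset Ω) := Subgroup.index_dvd_of_le (hle S)
  have hne (S : Finset Ω) : (fixingSubgroup Γ (S : Set Ω)).index ≠ 0 :=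
    ne_zero_of_dvd_ne_zero hker0 (hdvd S)
  obtain ⟨S, hS, hmax⟩ := Finset.exists_max_image
    (Finset.univ.filter fun S : Finset Ω => 2 ^ S.card ≤ (fixingSubgroup Γ (S : Set Ω)).index)
    Finset.card ⟨∅, by simp⟩
  simp only [Finset.mem_filter, Finset.mem_univ, true_and] at hS hmax
  refine ⟨S, ?_, fun γ => ⟨fun hγ x => ?_, fun hγ s _ => hγ s⟩⟩
  · have hpow : 2 ^ S.card ≤ Fintype.card Ω' ^ Fintype.card Ω' :=
      hS.trans ((Nat.le_of_dvd (Nat.pos_of_ne_zero hker0) (hdvd S)).trans hkerle)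
    have hpow' : (2 : ℝ) ^ S.card ≤ (Fintype.card Ω' : ℝ) ^ Fintype.card Ω' := by
      exact_mod_cast hpow
    have hlog := Real.logb_le_logb_of_le one_lt_two (by positivity) hpow'
    simpa [Real.logb_pow] using hlog
  · -- A point `x` moved by some `γ` fixing `S` could be added to `S`, against maximality.
    by_contra hx
    have hxS : x ∉ S := fun hxS => hx (hγ x hxS)
    have hlt : fixingSubgroup Γ ((insert x S : Finset Ω) : Set Ω) <
        fixingSubgroup Γ (S : Set Ω) := by
      refine lt_of_le_of_ne (fixingSubgroup_antitone Γ Ω (by simp)) fun heq => hx ?_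
      have hmem : γ ∈ fixingSubgroup Γ (S : Set Ω) := (mem_fixingSubgroup_iff Γ).mpr hγ
      rw [← heq] at hmem
      exact (mem_fixingSubgroup_iff Γ).mp hmem x (by simp)
    have hstep := two_mul_index_le_of_lt hlt (hne _)
    have hcard := Finset.card_insert_of_notMem hxS
    have := hmax (insert x S) (by rw [hcard, pow_succ]; omega)
    omega
end

section
/- Let $G$ be a connected, locally finite graph with infinite motion, let $v_0$ be a vertex of $G$, let $k \geq 0$, and let $\gamma$ be an automorphism of $G$ which fixes the ball $B(v_0,k)$ setwise and such that for every vertex $v$ with $d(v_0,v) = k+1$, the vertices $v$ and $\gamma v$ have exactly the same neighbours inside $B(v_0,k)$. Then $\gamma$ fixes $B(v_0,k)$ pointwise. -/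
/-!
Let `φ` act as `γ` on the ball `B = B(v₀,k)` and as the identity outside it. Then `φ` is an
automorphism. The only pairs to examine are `u ∈ B`, `v ∉ B`: if `d(v₀,v) > k + 1` then `v` has no
neighbour in `B`, which contains both `u` and `γ u`; if `d(v₀,v) = k + 1` then `γ u ~ v` iff
`γ u ~ γ v` (equal neighbourhoods inside `B`) iff `u ~ v`. Local finiteness makes `B` finite
(`finite_ball`), so `φ` moves only finitely many vertices and infinite motion forces it to be the
identity, i.e. `γ` fixes `B` pointwise.
-/

theorem finite_ball {V : Type*} (G : SimpleGraph V) [∀ v : V, Fintype (G.neighborSet v)]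
    (hconn : G.Connected) (k : ℕ) : ∀ u : V, {v : V | G.dist u v ≤ k}.Finite := by
  induction k with
  | zero =>
    intro u
    refine (Set.finite_singleton u).subset fun v hv => ?_
    have hv' : G.dist u v = 0 := Nat.le_zero.mp hv
    exact (hconn.dist_eq_zero_iff.mp hv').symm
  | succ k ih =>
    intro u
    -- A vertex of the ball other than `u` lies within `k` of the first step of a geodesic.
    have hfin : ({u} ∪ ⋃ w ∈ G.neighborSet u, {v : V | G.dist w v ≤ k}).Finite :=
      (Set.finite_singleton u).union ((Set.toFinite _).biUnion fun w _ => ih w)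
    refine hfin.subset fun v hv => ?_
    have hv' : G.dist u v ≤ k + 1 := hv
    obtain ⟨p, hp⟩ := hconn.exists_walk_length_eq_dist u v
    cases p with
    | nil => exact Or.inl rfl
    | cons h q =>
      refine Or.inr (Set.mem_biUnion h ?_)
      have h1 := SimpleGraph.dist_le q
      rw [SimpleGraph.Walk.length_cons] at hp
      change G.dist _ v ≤ k
      omega

/-- In a connected, locally finite graph with infinite motion, an automorphism which
fixes the ball `B(v₀,k)` setwise and such that every vertex `v` at distance `k+1`
has the same neighbours in `B(v₀,k)` as `γ v`, fixes `B(v₀,k)` pointwise. -/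
theorem stmt_5 {V : Type*} (G : SimpleGraph V) [∀ v : V, Fintype (G.neighborSet v)]
    (hconn : G.Connected)
    (hmotion : ∀ φ : G ≃g G, (∀ v, φ v = v) ∨ {v : V | φ v ≠ v}.Infinite)
    (v0 : V) (k : ℕ) (γ : G ≃g G)
    (hset : (fun v => γ v) '' {v : V | G.dist v0 v ≤ k} = {v : V | G.dist v0 v ≤ k})
    (hnbr : ∀ v : V, G.dist v0 v = k + 1 → ∀ u : V, G.dist v0 u ≤ k →
      (G.Adj u v ↔ G.Adj u (γ v))) :
    ∀ v : V, G.dist v0 v ≤ k → γ v = v := by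
  classical
  have hmem : ∀ v, G.dist v0 (γ v) ≤ k ↔ G.dist v0 v ≤ k := by
    intro v
    constructor
    · intro h
      have h' : γ v ∈ (fun v => γ v) '' {v : V | G.dist v0 v ≤ k} := by rw [hset]; exact h
      obtain ⟨w, hw, hwv⟩ := h'
      exact γ.injective hwv ▸ hw
    · intro h
      have h' : γ v ∈ (fun v => γ v) '' {v : V | G.dist v0 v ≤ k} := ⟨v, h, rfl⟩
      rw [hset] at h'
      exact h'
  let e : Equiv.Perm V := Equiv.Perm.ofSubtype
    (Equiv.Perm.subtypePerm (p := fun v => G.dist v0 v ≤ k) γ.toEquiv hmem)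
  have he_in : ∀ v, G.dist v0 v ≤ k → e v = γ v := fun v hv =>
    Equiv.Perm.ofSubtype_apply_of_mem (p := fun v => G.dist v0 v ≤ k) _ hv
  have he_out : ∀ v, ¬ G.dist v0 v ≤ k → e v = v := fun v hv =>
    Equiv.Perm.ofSubtype_apply_of_not_mem (p := fun v => G.dist v0 v ≤ k) _ hv
  have hcross : ∀ u v, G.dist v0 u ≤ k → ¬ G.dist v0 v ≤ k →
      (G.Adj (γ u) v ↔ G.Adj u v) := by
    intro u v hu hv
    by_cases hv1 : G.dist v0 v = k + 1
    · rw [hnbr v hv1 (γ u) ((hmem u).mpr hu), γ.map_adj_iff]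
    · have hfar : ∀ w, G.dist v0 w ≤ k → ¬ G.Adj w v := by
        intro w hw hadj
        have h1 := hconn.dist_triangle (u := v0) (v := w) (w := v)
        rw [SimpleGraph.dist_eq_one_iff_adj.mpr hadj] at h1
        omega
      exact iff_of_false (hfar _ ((hmem u).mpr hu)) (hfar _ hu)
  have hadj : ∀ {u v}, G.Adj (e u) (e v) ↔ G.Adj u v := by
    intro u v
    by_cases hu : G.dist v0 u ≤ k <;> by_cases hv : G.dist v0 v ≤ k
    · rw [he_in u hu, he_in v hv, γ.map_adj_iff]
    · rw [he_in u hu, he_out v hv, hcross u v hu hv]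
    · rw [he_out u hu, he_in v hv, G.adj_comm, hcross v u hv hu, G.adj_comm]
    · rw [he_out u hu, he_out v hv]
  let φ : G ≃g G := ⟨e, hadj⟩
  intro v hv
  rcases hmotion φ with h | h
  · rw [← he_in v hv]
    exact h v
  · refine absurd ((finite_ball G hconn k v0).subset fun w hw => ?_) h
    by_contra hw'
    exact hw (he_out w hw')
end
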